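/- arXiv:math/0609591 — 2 statements merged into one kernel-verified Lean document; each statement's English description precedes it below -/
import Mathlib

section
/- Let m > 3 be an integer. There is a constant C (depending on m) such that for every locally absolutely continuous z : (0,∞) → ℂ with ‖z‖_X < ∞, with z'/ρ and z/ρ² in L²(ρ dρ), and satisfying the orthogonality condition ∫₀^∞ z(ρ) h₁(ρ) ρ dρ = 0, one has ‖ |z'|/ρ + |z|/ρ² ‖_{L²(ρ dρ)} ≤ C ‖(L₀ z)/ρ‖_{L²(ρ dρ)}. -/
open MeasureTheory Set Real Filter
open scoped ENNReal

noncomputable section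

abbrev V3 := Fin 3 → ℝ
abbrev V2 := Fin 2 → ℝ

/-- cross product in ℝ³ -/
def cross3 (a b : V3) : V3 :=
  ![a 1 * b 2 - a 2 * b 1, a 2 * b 0 - a 0 * b 2, a 0 * b 1 - a 1 * b 0]

/-- dot product in ℝ³ -/
def dot3 (a b : V3) : ℝ := a 0 * b 0 + a 1 * b 1 + a 2 * b 2

/-- squared euclidean norm in ℝ³ -/
def nsq3 (a : V3) : ℝ := a 0 ^ 2 + a 1 ^ 2 + a 2 ^ 2

/-- the generator R of rotations about the x₃-axis -/
def Rv (a : V3) : V3 := ![-a 1, a 0, 0]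

/-- the rotation e^{αR} about the x₃-axis -/
def rotZ (α : ℝ) (a : V3) : V3 :=
  ![Real.cos α * a 0 - Real.sin α * a 1, Real.sin α * a 0 + Real.cos α * a 1, a 2]

def kHat : V3 := ![0, 0, 1]
def negkHat : V3 := ![0, 0, -1]
def jHat : V3 := ![0, 1, 0]

/-- first component of the harmonic map profile -/
def h1f (m : ℕ) (r : ℝ) : ℝ := 2 / (r ^ (m : ℤ) + r ^ (-(m : ℤ)))

/-- third component of the harmonic map profile -/
def h3f (m : ℕ) (r : ℝ) : ℝ := (r ^ (m : ℤ) - r ^ (-(m : ℤ))) / (r ^ (m : ℤ) + r ^ (-(m : ℤ)))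

/-- the harmonic map profile h -/
def hProf (m : ℕ) (r : ℝ) : V3 := ![h1f m r, 0, h3f m r]

/-- the r-derivative of the harmonic map profile -/
def dhProf (m : ℕ) (r : ℝ) : V3 :=
  ![-((m : ℝ) / r) * h1f m r * h3f m r, 0, ((m : ℝ) / r) * (h1f m r) ^ 2]

/-- profile of the harmonic map e^{(mθ+α)R} h(r/s) -/
def harmP (m : ℕ) (s α : ℝ) (r : ℝ) : V3 := rotZ α (hProf m (r / s))

/-- its r-derivative -/
def dharmP (m : ℕ) (s α : ℝ) (r : ℝ) : V3 := fun i => (1 / s) * rotZ α (dhProf m (r / s)) i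

/-- `v` is locally absolutely continuous on (0,∞), with a.e. derivative `dv`. -/
def LocAC (v dv : ℝ → V3) : Prop :=
  (∀ a b : ℝ, 0 < a → a ≤ b → ∀ i, IntervalIntegrable (fun r => dv r i) volume a b) ∧
  (∀ a b : ℝ, 0 < a → a ≤ b → ∀ i, v b i - v a i = ∫ r in a..b, dv r i)

/-- energy density (w.r.t. dr) of the m-equivariant map with profile (v,dv) -/
def eDen (m : ℕ) (v dv : ℝ → V3) (r : ℝ) : ℝ :=
  (nsq3 (dv r) + ((m : ℝ) ^ 2 / r ^ 2) * ((v r 0) ^ 2 + (v r 1) ^ 2)) * r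

/-- the energy E(u) = (1/2)∫|∇u|² of the m-equivariant map with profile (v,dv) -/
def energy (m : ℕ) (v dv : ℝ → V3) : ℝ := π * ∫ r in Ioi (0:ℝ), eDen m v dv r

/-- membership in the class Σ_m, expressed in terms of the profile (v,dv) -/
def InSigma (m : ℕ) (v dv : ℝ → V3) : Prop :=
  LocAC v dv ∧ (∀ r ∈ Ioi (0:ℝ), nsq3 (v r) = 1) ∧
  IntegrableOn (eDen m v dv) (Ioi (0:ℝ)) ∧
  Tendsto v (nhdsWithin 0 (Ioi 0)) (nhds negkHat) ∧
  Tendsto v atTop (nhds kHat)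

/-- squared Ḣ¹(ℝ²) distance between the m-equivariant maps with profiles (v,dv), (w,dw) -/
def dH1sq (m : ℕ) (v dv w dw : ℝ → V3) : ℝ :=
  2 * π * ∫ r in Ioi (0:ℝ),
    (nsq3 (fun i => dv r i - dw r i)
      + ((m : ℝ) ^ 2 / r ^ 2) * ((v r 0 - w r 0) ^ 2 + (v r 1 - w r 1) ^ 2)) * r

/-- Ḣ¹(ℝ²) distance -/
def dH1 (m : ℕ) (v dv w dw : ℝ → V3) : ℝ := Real.sqrt (dH1sq m v dv w dw)

/-- the polar angle of a point of ℝ² -/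
def angleOf (x : V2) : ℝ := Complex.arg ⟨x 0, x 1⟩

/-- the radius of a point of ℝ² -/
def radOf (x : V2) : ℝ := Real.sqrt ((x 0) ^ 2 + (x 1) ^ 2)

/-- the m-equivariant map u(r,θ) = e^{mθR} v(r) -/
def eqMap (m : ℕ) (v : ℝ → V3) (x : V2) : V3 := rotZ ((m : ℝ) * angleOf x) (v (radOf x))

/-- the spatial gradient ∂_j u of the m-equivariant map with profile (v,dv) -/
def eqGrad (m : ℕ) (v dv : ℝ → V3) (x : V2) (j : Fin 2) : V3 :=
  rotZ ((m : ℝ) * angleOf x) (fun i =>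
    (x j / radOf x) * dv (radOf x) i
      + ((m : ℝ) * (if j = 0 then -(x 1) else x 0) / radOf x ^ 2) * Rv (v (radOf x)) i)

/-- weak (distributional) form of the Schrödinger map equation ∂ₜu = u × Δu on the time
interval I, for the m-equivariant map with time-dependent profile (v,dv):
∫∫ { u·φ_t - Σ_j (u × ∂_j u)·∂_j φ } dx dt = 0 for all C¹ compactly supported φ. -/
def WeakSM (m : ℕ) (I : Set ℝ) (v dv : ℝ → ℝ → V3) : Prop :=
  ∀ φ : ℝ → V2 → V3,
    (∀ i, ContDiff ℝ 1 (fun q : ℝ × V2 => φ q.1 q.2 i)) →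
    (∀ i, HasCompactSupport (fun q : ℝ × V2 => φ q.1 q.2 i)) →
    (∀ t, t ∉ interior I → ∀ x, φ t x = 0) →
    (∫ t in I, ∫ x : V2,
      (dot3 (eqMap m (v t) x) (fun i => deriv (fun τ => φ τ x i) t)
        - ∑ j : Fin 2, dot3 (cross3 (eqMap m (v t) x) (eqGrad m (v t) (dv t) x j))
            (fun i => fderiv ℝ (fun y => φ t y i) x (Pi.single j 1)))) = 0

/-- continuity in t of the map t ↦ u(t) with respect to the Ḣ¹ distance, on I -/
def H1Cont (m : ℕ) (I : Set ℝ) (v dv : ℝ → ℝ → V3) : Prop :=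
  ∀ t₀ ∈ I, ∀ ε > (0:ℝ), ∃ η > (0:ℝ), ∀ t ∈ I, |t - t₀| < η →
    dH1 m (v t) (dv t) (v t₀) (dv t₀) < ε

/-- a weak solution of the Schrödinger map equation in the class C(I; Σ_m), with
initial profile v₀ -/
def SolClass (m : ℕ) (I : Set ℝ) (v dv : ℝ → ℝ → V3) (v₀ : ℝ → V3) : Prop :=
  (∀ r ∈ Ioi (0:ℝ), v 0 r = v₀ r) ∧ WeakSM m I v dv ∧
  (∀ t ∈ I, InSigma m (v t) (dv t)) ∧ H1Cont m I v dv

/-- the profile of Δu for the m-equivariant map u with profile (v,dv,ddv):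
Δu = e^{mθR}( v_rr + v_r/r + (m²/r²) R² v ) -/
def lapP (m : ℕ) (v dv ddv : ℝ → V3) (r : ℝ) : V3 := fun i =>
  ddv r i + dv r i / r + ((m : ℝ) ^ 2 / r ^ 2) * (![-(v r 0), -(v r 1), 0] : V3) i

/-- squared Ḣ² distance (via the Laplacian) -/
def dH2sq (m : ℕ) (v dv ddv w dw ddw : ℝ → V3) : ℝ :=
  2 * π * ∫ r in Ioi (0:ℝ), nsq3 (fun i => lapP m v dv ddv r i - lapP m w dw ddw r i) * r


/-- `z` is locally absolutely continuous on (0,∞), with a.e. derivative `dz`. -/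
def LocACC (z dz : ℝ → ℂ) : Prop :=
  (∀ a b : ℝ, 0 < a → a ≤ b → IntervalIntegrable dz volume a b) ∧
  (∀ a b : ℝ, 0 < a → a ≤ b → z b - z a = ∫ ρ in a..b, dz ρ)

/-- the density (w.r.t. dρ) of the squared X-norm: (|z'|² + |z|²/ρ²) ρ -/
def xDen (z dz : ℝ → ℂ) (ρ : ℝ) : ℝ := (‖dz ρ‖ ^ 2 + ‖z ρ‖ ^ 2 / ρ ^ 2) * ρ

/-- the X-norm ‖z‖_X = (∫ (|z'|² + |z|²/ρ²) ρ dρ)^{1/2} -/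
def normX (z dz : ℝ → ℂ) : ℝ := Real.sqrt (∫ ρ in Ioi (0:ℝ), xDen z dz ρ)

/-- the operator L₀ = ∂_ρ + (m/ρ) h₃(ρ) -/
def L0op (m : ℕ) (z dz : ℝ → ℂ) (ρ : ℝ) : ℂ :=
  dz ρ + ((((m : ℝ) / ρ) * h3f m ρ : ℝ) : ℂ) * z ρ


/-!
Since `h₁` spans the kernel of `L₀`, the quotient `v = z / h₁ - z(1)` satisfies `v' = (L₀ z) / h₁`
and `v(1) = 0`. On `(0, 1]` and on `[1, ∞)` the profile `h₁` is comparable to `ρ ^ m` and to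
`ρ ^ (-m)`, so Hardy's inequality with power weights, applied to `v` on each side of `1`, bounds the
remainder `w = h₁ v = z - z(1) h₁` by `L₀ z`. Orthogonality to `h₁` turns `z(1) ∫ h₁² ρ dρ` into
`-∫ w h₁ ρ dρ`, which Cauchy–Schwarz controls by the norm of `w / ρ²` because `ρ² h₁` is square
integrable; this is where `m > 3` enters. Finally `z'` is recovered from `L₀ z` and `z`, as `h₃` is
bounded.
-/

section AbsolutelyContinuous

variable {X E : Type*} [PseudoMetricSpace X] [NormedAddCommGroup E] {a b : ℝ}

lemma absolutelyContinuousOnInterval_of_dist_le {Y : Type*} [PseudoMetricSpace Y]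
    {f : ℝ → X} {g : ℝ → Y} (hg : AbsolutelyContinuousOnInterval g a b)
    (hfg : ∀ x ∈ uIcc a b, ∀ y ∈ uIcc a b, dist (f x) (f y) ≤ dist (g x) (g y)) :
    AbsolutelyContinuousOnInterval f a b := by
  rw [absolutelyContinuousOnInterval_iff] at hg ⊢
  intro ε hε
  obtain ⟨δ, hδ, h⟩ := hg ε hε
  refine ⟨δ, hδ, fun P hP hlen => (Finset.sum_le_sum fun i hi => ?_).trans_lt (h P hP hlen)⟩
  exact hfg _ (hP.1 i hi).1 _ (hP.1 i hi).2

lemma absolutelyContinuousOnInterval_intervalIntegral [NormedSpace ℝ E] {f : ℝ → E}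
    (hf : IntervalIntegrable f volume a b) :
    AbsolutelyContinuousOnInterval (fun x => ∫ t in a..x, f t) a b := by
  refine absolutelyContinuousOnInterval_of_dist_le
    (hf.norm.absolutelyContinuousOnInterval_intervalIntegral left_mem_uIcc) fun x hx y hy => ?_
  have hsub {u w : ℝ} (hu : u ∈ uIcc a b) (hw : w ∈ uIcc a b) :
      IntervalIntegrable f volume u w := hf.mono_set (uIcc_subset_uIcc hu hw)
  rw [dist_eq_norm, dist_eq_norm,
    intervalIntegral.integral_interval_sub_left (hsub left_mem_uIcc hx) (hsub left_mem_uIcc hy),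
    intervalIntegral.integral_interval_sub_left (hsub left_mem_uIcc hx).norm
      (hsub left_mem_uIcc hy).norm]
  exact intervalIntegral.norm_integral_le_abs_integral_norm

/-- `f` is absolutely continuous on the interval between `a` and `b`, and `f'` is its derivative
at almost every point of it. -/
structure HasACDeriv [NormedSpace ℝ E] (f f' : ℝ → E) (a b : ℝ) : Prop where
  absolutelyContinuousOnInterval : AbsolutelyContinuousOnInterval f a b
  ae_hasDerivAt : ∀ᵐ x, x ∈ uIcc a b → HasDerivAt f (f' x) x

namespace HasACDeriv

lemma of_hasDerivAt [NormedSpace ℝ E] {f f' : ℝ → E} (hf : ∀ x ∈ uIcc a b, HasDerivAt f (f' x) x)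
    (hf' : ContinuousOn f' (uIcc a b)) : HasACDeriv f f' a b := by
  refine ⟨?_, ae_of_all _ hf⟩
  obtain ⟨K, hK⟩ := isCompact_uIcc.exists_bound_of_continuousOn hf'
  exact ((convex_uIcc a b).lipschitzOnWith_of_nnnorm_hasDerivWithin_le
    (fun x hx => (hf x hx).hasDerivWithinAt)
    fun x hx => NNReal.le_toNNReal_of_coe_le (hK x hx)).absolutelyContinuousOnInterval

lemma of_sub_eq_integral [NormedSpace ℝ E] [CompleteSpace E] {f f' : ℝ → E}
    (hf' : IntervalIntegrable f' volume a b)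
    (hf : ∀ x ∈ uIcc a b, f x - f a = ∫ t in a..x, f' t) : HasACDeriv f f' a b := by
  have hdist : ∀ x ∈ uIcc a b, ∀ y ∈ uIcc a b,
      dist (f x) (f y) ≤ dist (∫ t in a..x, f' t) (∫ t in a..y, f' t) := fun x hx y hy => by
    rw [← hf x hx, ← hf y hy, dist_sub_right]
  refine ⟨absolutelyContinuousOnInterval_of_dist_le
    (absolutelyContinuousOnInterval_intervalIntegral hf') hdist, ?_⟩
  have hne (c : ℝ) : ∀ᵐ x : ℝ, x ≠ c := by simp [ae_iff]
  filter_upwards [hf'.ae_hasDerivAt_integral, hne (min a b), hne (max a b)]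
    with x hx hmin hmax hxm
  have hnhds : uIcc a b ∈ nhds x :=
    Icc_mem_nhds (lt_of_le_of_ne hxm.1 hmin.symm) (lt_of_le_of_ne hxm.2 hmax)
  refine ((hx hxm a left_mem_uIcc).const_add (f a)).congr_of_eventuallyEq ?_
  filter_upwards [hnhds] with y hy
  rw [← hf y hy, add_sub_cancel]

lemma sub_const [NormedSpace ℝ E] {f f' : ℝ → E} (hf : HasACDeriv f f' a b) (c : E) :
    HasACDeriv (fun x => f x - c) f' a b where
  absolutelyContinuousOnInterval :=
    absolutelyContinuousOnInterval_of_dist_le hf.1 fun _ _ _ _ => (dist_sub_right _ _ c).le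
  ae_hasDerivAt := hf.2.mono fun _ hx hxm => (hx hxm).sub_const c

lemma smul [NormedSpace ℝ E] {φ φ' : ℝ → ℝ} {f f' : ℝ → E} (hφ : HasACDeriv φ φ' a b)
    (hf : HasACDeriv f f' a b) :
    HasACDeriv (fun x => φ x • f x) (fun x => φ x • f' x + φ' x • f x) a b where
  absolutelyContinuousOnInterval := hφ.1.smul hf.1
  ae_hasDerivAt := by
    filter_upwards [hφ.2, hf.2] with x hφx hfx hx using (hφx hx).smul (hfx hx)

lemma norm_sq [InnerProductSpace ℝ E] {f f' : ℝ → E} (hf : HasACDeriv f f' a b) :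
    HasACDeriv (fun x => ‖f x‖ ^ 2) (fun x => 2 * inner ℝ (f x) (f' x)) a b where
  absolutelyContinuousOnInterval := by
    have hnorm : AbsolutelyContinuousOnInterval (fun x => ‖f x‖) a b :=
      absolutelyContinuousOnInterval_of_dist_le hf.1 fun _ _ _ _ =>
        (dist_norm_norm_le _ _).trans_eq (dist_eq_norm _ _).symm
    simp only [sq]
    exact hnorm.mul hnorm
  ae_hasDerivAt := hf.2.mono fun _ hx hxm => (hx hxm).norm_sq

lemma ae_deriv_eq [NormedSpace ℝ E] {f f' : ℝ → E} (hf : HasACDeriv f f' a b) :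
    ∀ᵐ x, x ∈ uIoc a b → deriv f x = f' x :=
  hf.2.mono fun _ hx hxm => (hx (uIoc_subset_uIcc hxm)).deriv

variable {f f' : ℝ → ℝ}

lemma intervalIntegrable (hf : HasACDeriv f f' a b) : IntervalIntegrable f' volume a b :=
  hf.1.intervalIntegrable_deriv.congr_ae
    ((ae_restrict_iff' measurableSet_uIoc).mpr hf.ae_deriv_eq)

lemma integral_eq_sub (hf : HasACDeriv f f' a b) : ∫ x in a..b, f' x = f b - f a := by
  rw [← hf.1.integral_deriv_eq_sub]
  exact (intervalIntegral.integral_congr_ae hf.ae_deriv_eq).symm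

end HasACDeriv

end AbsolutelyContinuous

section Hardy

variable {E : Type*} [NormedAddCommGroup E] {a b p : ℝ}

lemma rpow_mul_norm_sq_div_le_of_eq_zero {u w : E} (ha : 0 < a) (hb : 0 < b)
    (hend : p < 0 ∧ u = 0 ∨ 0 < p ∧ w = 0) : b ^ p * ‖w‖ ^ 2 / p ≤ a ^ p * ‖u‖ ^ 2 / p := by
  rcases hend with ⟨hp, rfl⟩ | ⟨hp, rfl⟩
  · rw [norm_zero, zero_pow two_ne_zero, mul_zero, zero_div]
    exact div_nonpos_of_nonneg_of_nonpos (by positivity) hp.le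
  · rw [norm_zero, zero_pow two_ne_zero, mul_zero, zero_div]
    positivity

variable [InnerProductSpace ℝ E] {v v' : ℝ → E}

-- Expand the square of `v + (2 / p) x v'`.
lemma rpow_mul_norm_sq_div_le {x : ℝ} (hx : 0 < x) (hp : p ≠ 0) (u w : E) :
    x ^ p * (‖u‖ ^ 2 / x) ≤ 2 / p * (x ^ p • (2 * inner ℝ u w) + (p * x ^ (p - 1)) • ‖u‖ ^ 2)
      + (2 / p) ^ 2 * (x ^ p * (x * ‖w‖ ^ 2)) := by
  have hsq : 0 ≤ x ^ p * (‖u + (2 / p * x) • w‖ ^ 2 / x) := by positivity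
  rw [norm_add_sq_real, norm_smul, mul_pow, Real.norm_eq_abs, sq_abs, real_inner_smul_right] at hsq
  rw [rpow_sub_one hx.ne', smul_eq_mul, smul_eq_mul]
  refine sub_nonneg.mp (hsq.trans_eq ?_)
  field_simp
  ring

theorem HasACDeriv.integral_rpow_mul_norm_sq_div_le (hv : HasACDeriv v v' a b) (ha : 0 < a)
    (hab : a ≤ b) (hend : p < 0 ∧ v a = 0 ∨ 0 < p ∧ v b = 0)
    (hv' : IntervalIntegrable (fun x => x ^ p * (x * ‖v' x‖ ^ 2)) volume a b) :
    ∫ x in a..b, x ^ p * (‖v x‖ ^ 2 / x)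
      ≤ (2 / p) ^ 2 * ∫ x in a..b, x ^ p * (x * ‖v' x‖ ^ 2) := by
  have hp : p ≠ 0 := hend.elim (fun h => h.1.ne) fun h => h.1.ne'
  have hbdry := rpow_mul_norm_sq_div_le_of_eq_zero ha (ha.trans_le hab) hend
  have hpos : ∀ x ∈ uIcc a b, 0 < x := fun x hx => ha.trans_le (uIcc_of_le hab ▸ hx).1
  have hrpow (q : ℝ) : ContinuousOn (fun x : ℝ => x ^ q) (uIcc a b) :=
    continuousOn_id.rpow_const fun x hx => .inl (hpos x hx).ne'
  have hweight : HasACDeriv (fun x : ℝ => x ^ p) (fun x => p * x ^ (p - 1)) a b :=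
    .of_hasDerivAt (fun x hx => hasDerivAt_rpow_const (.inl (hpos x hx).ne'))
      (continuousOn_const.mul (hrpow _))
  have hprod := hweight.smul hv.norm_sq
  have hlhs : IntervalIntegrable (fun x => x ^ p * (‖v x‖ ^ 2 / x)) volume a b :=
    ((hrpow p).mul ((hv.1.continuousOn.norm.pow 2).div continuousOn_id
      fun x hx => (hpos x hx).ne')).intervalIntegrable
  calc ∫ x in a..b, x ^ p * (‖v x‖ ^ 2 / x)
      ≤ ∫ x in a..b,
          (2 / p * (x ^ p • (2 * inner ℝ (v x) (v' x)) + (p * x ^ (p - 1)) • ‖v x‖ ^ 2)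
            + (2 / p) ^ 2 * (x ^ p * (x * ‖v' x‖ ^ 2))) :=
        intervalIntegral.integral_mono_on hab hlhs
          ((hprod.intervalIntegrable.const_mul _).add (hv'.const_mul _))
          fun x hx => rpow_mul_norm_sq_div_le (ha.trans_le hx.1) hp _ _
    _ = 2 * (b ^ p * ‖v b‖ ^ 2 / p - a ^ p * ‖v a‖ ^ 2 / p)
          + (2 / p) ^ 2 * ∫ x in a..b, x ^ p * (x * ‖v' x‖ ^ 2) := by
        rw [intervalIntegral.integral_add (hprod.intervalIntegrable.const_mul _)
          (hv'.const_mul _), intervalIntegral.integral_const_mul,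
          intervalIntegral.integral_const_mul, hprod.integral_eq_sub, smul_eq_mul, smul_eq_mul]
        ring
    _ ≤ _ := by linarith

end Hardy

section Profile

variable {m : ℕ} {r : ℝ}

lemma h1f_pos (hr : 0 < r) : 0 < h1f m r := by
  unfold h1f; positivity

lemma inv_h1f (m : ℕ) (r : ℝ) : (h1f m r)⁻¹ = (r ^ (m : ℤ) + r ^ (-(m : ℤ))) / 2 :=
  inv_div _ _

lemma h1f_one (m : ℕ) : h1f m 1 = 1 := by
  norm_num [h1f]

lemma abs_h3f_le_one (hr : 0 < r) : |h3f m r| ≤ 1 := by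
  have hpos : 0 < r ^ (m : ℤ) := zpow_pos hr _
  have hneg : 0 < r ^ (-(m : ℤ)) := zpow_pos hr _
  rw [h3f, abs_div, abs_of_pos (add_pos hpos hneg), div_le_one (add_pos hpos hneg), abs_le]
  constructor <;> linarith

lemma hasDerivAt_inv_h1f (hr : 0 < r) :
    HasDerivAt (fun x => (h1f m x)⁻¹) (m / r * h3f m r * (h1f m r)⁻¹) r := by
  have hsum : r ^ (m : ℤ) + r ^ (-(m : ℤ)) ≠ 0 := by positivity
  have hderiv := ((hasDerivAt_zpow (m : ℤ) r (.inl hr.ne')).add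
    (hasDerivAt_zpow (-(m : ℤ)) r (.inl hr.ne'))).div_const 2
  refine (hderiv.congr_of_eventuallyEq (.of_forall (inv_h1f m))).congr_deriv ?_
  rw [inv_h1f, h3f, zpow_sub_one₀ hr.ne', zpow_sub_one₀ hr.ne']
  push_cast
  field_simp
  ring

lemma continuousOn_inv_h1f : ContinuousOn (fun r => (h1f m r)⁻¹) (Ioi 0) := fun _ hr =>
  (hasDerivAt_inv_h1f hr).continuousAt.continuousWithinAt

lemma continuousOn_h1f : ContinuousOn (h1f m) (Ioi 0) := by
  simpa only [Pi.inv_def, inv_inv] using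
    continuousOn_inv_h1f.inv₀ fun r (hr : 0 < r) => (inv_pos.mpr (h1f_pos (m := m) hr)).ne'

lemma continuousOn_h3f : ContinuousOn (h3f m) (Ioi 0) := by
  have hzpow (k : ℤ) : ContinuousOn (fun r : ℝ => r ^ k) (Ioi 0) :=
    continuousOn_id.zpow₀ k fun r hr => .inl (ne_of_gt hr)
  exact ((hzpow m).sub (hzpow (-m))).div ((hzpow m).add (hzpow (-m))) fun r hr =>
    (add_pos (zpow_pos hr _) (zpow_pos hr _)).ne'

lemma h1f_le_two_mul_zpow (hr : 0 < r) : h1f m r ≤ 2 * r ^ (m : ℤ) := by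
  rw [h1f, div_le_iff₀ (by positivity), mul_assoc, mul_add, zpow_neg,
    mul_inv_cancel₀ (by positivity)]
  have := mul_pos (zpow_pos hr m) (zpow_pos hr m)
  linarith

lemma h1f_le_two_mul_zpow_neg (hr : 0 < r) : h1f m r ≤ 2 * r ^ (-(m : ℤ)) := by
  rw [h1f, div_le_iff₀ (by positivity), mul_assoc, mul_add, zpow_neg,
    inv_mul_cancel₀ (by positivity), ← zpow_neg]
  have := mul_pos (zpow_pos hr (-m)) (zpow_pos hr (-m))
  linarith

lemma zpow_le_h1f (hr : 0 < r) (hr1 : r ≤ 1) : r ^ (m : ℤ) ≤ h1f m r := by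
  rw [h1f, le_div_iff₀ (by positivity), mul_add, ← zpow_add₀ hr.ne', ← zpow_add₀ hr.ne',
    add_neg_cancel, zpow_zero]
  have : r ^ ((m : ℤ) + m) ≤ 1 := zpow_le_one₀ hr hr1 (by positivity)
  linarith

lemma zpow_neg_le_h1f (hr1 : 1 ≤ r) : r ^ (-(m : ℤ)) ≤ h1f m r := by
  have hr : 0 < r := one_pos.trans_le hr1
  rw [h1f, le_div_iff₀ (by positivity), mul_add, ← zpow_add₀ hr.ne', ← zpow_add₀ hr.ne',
    neg_add_cancel, zpow_zero]
  have : r ^ (-(m : ℤ) + -m) ≤ 1 := zpow_le_one_of_nonpos₀ hr1 (by lia)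
  linarith

lemma h1f_sq_mul_rpow_le {k : ℤ} {s : ℝ} (hr : 0 < r) (hk : h1f m r ≤ 2 * r ^ k) :
    h1f m r ^ 2 * r ^ s ≤ 4 * r ^ (2 * k + s) := by
  calc h1f m r ^ 2 * r ^ s ≤ (2 * r ^ k) ^ 2 * r ^ s := by
        gcongr
        exact (h1f_pos hr).le
    _ = 4 * r ^ (2 * k + s) := by
        rw [← rpow_intCast, mul_pow, ← rpow_mul_natCast hr.le, mul_assoc, ← rpow_add hr,
          Nat.cast_ofNat, mul_comm (k : ℝ)]
        norm_num

lemma integrableOn_h1f_sq_mul_rpow {s : ℝ} (hs : -(2 * m + 1) < s) (hs' : s < 2 * m - 1) :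
    IntegrableOn (fun r => h1f m r ^ 2 * r ^ s) (Ioi 0) := by
  have hcont : ContinuousOn (fun r => h1f m r ^ 2 * r ^ s) (Ioi 0) :=
    (continuousOn_h1f.pow 2).mul (continuousOn_id.rpow_const fun r hr => .inl (ne_of_gt hr))
  have hmeas := hcont.aestronglyMeasurable (μ := volume) measurableSet_Ioi
  have hbound {k : ℤ} {r : ℝ} (hr : 0 < r) (hk : h1f m r ≤ 2 * r ^ k) :
      ‖h1f m r ^ 2 * r ^ s‖ ≤ 4 * r ^ (2 * k + s) := by
    rw [Real.norm_of_nonneg (by positivity)]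
    exact h1f_sq_mul_rpow_le hr hk
  rw [← Ioc_union_Ioi_eq_Ioi zero_le_one]
  refine IntegrableOn.union ?_ ?_
  · have hint : IntegrableOn (fun r : ℝ => r ^ (2 * ((m : ℤ) : ℝ) + s)) (Ioc 0 1) :=
      (intervalIntegrable_iff_integrableOn_Ioc_of_le zero_le_one).mp
        (intervalIntegral.intervalIntegrable_rpow' (by push_cast; linarith))
    refine (hint.const_mul 4).mono' (hmeas.mono_set Ioc_subset_Ioi_self)
      ((ae_restrict_mem measurableSet_Ioc).mono fun r hr => ?_)
    exact hbound hr.1 (h1f_le_two_mul_zpow hr.1)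
  · have hint : IntegrableOn (fun r : ℝ => r ^ (2 * ((-m : ℤ) : ℝ) + s)) (Ioi 1) :=
      integrableOn_Ioi_rpow_of_lt (by push_cast; linarith) one_pos
    refine (hint.const_mul 4).mono' (hmeas.mono_set (Ioi_subset_Ioi zero_le_one))
      ((ae_restrict_mem measurableSet_Ioi).mono fun r hr => ?_)
    exact hbound (one_pos.trans hr) (h1f_le_two_mul_zpow_neg (one_pos.trans hr))

end Profile

section ImproperIntegral

lemma integrableOn_Ioi_and_integral_le_of_intervalIntegral_le {f : ℝ → ℝ} {A c I : ℝ} (hAc : A < c)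
    (hf : ∀ a b, A < a → a ≤ b → IntervalIntegrable f volume a b) (hf0 : ∀ x, A < x → 0 ≤ f x)
    (hI : ∀ a b, A < a → a ≤ c → c ≤ b → ∫ x in a..b, f x ≤ I) :
    IntegrableOn f (Ioi A) ∧ ∫ x in Ioi A, f x ≤ I := by
  obtain ⟨u, -, hu, hu_lim⟩ := exists_seq_strictAnti_tendsto' hAc
  have hcover : AECover (volume.restrict (Ioi A)) atTop fun n : ℕ => Ioc (u n) (c + n) :=
    (aecover_Ioi_of_Ioi hu_lim).inter ((aecover_Iic
      (tendsto_atTop_add_const_left _ c tendsto_natCast_atTop_atTop)).mono Measure.restrict_le_self)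
  have hrestrict (n : ℕ) :
      (volume.restrict (Ioi A)).restrict (Ioc (u n) (c + n))
        = volume.restrict (Ioc (u n) (c + n)) :=
    Measure.restrict_restrict_of_subset fun x hx => (hu n).1.trans hx.1
  have hcn (n : ℕ) : c ≤ c + n := le_add_of_nonneg_right n.cast_nonneg
  have hun (n : ℕ) : u n ≤ c + n := (hu n).2.le.trans (hcn n)
  have hle (n : ℕ) : ∫ x in Ioc (u n) (c + n), f x ∂volume.restrict (Ioi A) ≤ I := by
    rw [hrestrict, ← intervalIntegral.integral_of_le (hun n)]
    exact hI _ _ (hu n).1 (hu n).2.le (hcn n)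
  have hint : IntegrableOn f (Ioi A) :=
    hcover.integrable_of_integral_bounded_of_nonneg_ae I
      (fun n => by rw [IntegrableOn, hrestrict]; exact (hf _ _ (hu n).1 (hun n)).1)
      ((ae_restrict_mem measurableSet_Ioi).mono hf0) (.of_forall hle)
  exact ⟨hint, le_of_tendsto' (hcover.integral_tendsto_of_countably_generated hint) hle⟩

end ImproperIntegral

section Domination

lemma integrableOn_and_setIntegral_le_of_le_add {α : Type*} [MeasurableSpace α] {μ : Measure α}
    {s : Set α} {f u v : α → ℝ} {c d : ℝ} (hs : MeasurableSet s)
    (hf : AEStronglyMeasurable f (μ.restrict s)) (hf0 : ∀ x ∈ s, 0 ≤ f x)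
    (hle : ∀ x ∈ s, f x ≤ c * u x + d * v x) (hu : IntegrableOn u s μ) (hv : IntegrableOn v s μ) :
    IntegrableOn f s μ ∧ ∫ x in s, f x ∂μ ≤ c * ∫ x in s, u x ∂μ + d * ∫ x in s, v x ∂μ := by
  have hdom : IntegrableOn (fun x => c * u x + d * v x) s μ :=
    (hu.const_mul c).add (hv.const_mul d)
  have hint : IntegrableOn f s μ := hdom.mono' hf <| by
    filter_upwards [ae_restrict_mem hs] with x hx
    exact (Real.norm_of_nonneg (hf0 x hx)).trans_le (hle x hx)
  refine ⟨hint, (setIntegral_mono_on hint hdom hs hle).trans_eq ?_⟩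
  rw [integral_add (hu.const_mul c) (hv.const_mul d), integral_const_mul, integral_const_mul]

end Domination

section LocACC

variable {z dz : ℝ → ℂ} {m : ℕ} {a b : ℝ}

lemma LocACC.hasACDeriv (hz : LocACC z dz) (ha : 0 < a) (hab : a ≤ b) : HasACDeriv z dz a b :=
  .of_sub_eq_integral (hz.1 a b ha hab) fun x hx => hz.2 a x ha (uIcc_of_le hab ▸ hx).1

lemma LocACC.continuousOn (hz : LocACC z dz) : ContinuousOn z (Ioi 0) := by
  intro x (hx : 0 < x)
  have hcont := (hz.hasACDeriv (half_pos hx) (by linarith : x / 2 ≤ 2 * x)).1.continuousOn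
  rw [uIcc_of_le (by linarith)] at hcont
  exact (hcont.continuousAt (Icc_mem_nhds (by linarith) (by linarith))).continuousWithinAt

lemma LocACC.aestronglyMeasurable_deriv (hz : LocACC z dz) :
    AEStronglyMeasurable dz (volume.restrict (Ioi 0)) := by
  refine LocallyIntegrableOn.aestronglyMeasurable fun x (hx : 0 < x) => ?_
  have hint := hz.1 (x / 2) (2 * x) (by linarith) (by linarith)
  rw [intervalIntegrable_iff_integrableOn_Icc_of_le (by linarith)] at hint
  exact ⟨_, mem_nhdsWithin_of_mem_nhds (Icc_mem_nhds (by linarith) (by linarith)), hint⟩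

lemma LocACC.aestronglyMeasurable_L0op (hz : LocACC z dz) :
    AEStronglyMeasurable (L0op m z dz) (volume.restrict (Ioi 0)) := by
  refine hz.aestronglyMeasurable_deriv.add (ContinuousOn.aestronglyMeasurable ?_ measurableSet_Ioi)
  refine ContinuousOn.mul (Complex.continuous_ofReal.comp_continuousOn ?_) hz.continuousOn
  exact (continuousOn_const.div continuousOn_id fun x (hx : 0 < x) => hx.ne').mul continuousOn_h3f

lemma norm_potential_mul_le {r : ℝ} (hr : 0 < r) (u : ℂ) :
    ‖((m / r * h3f m r : ℝ) : ℂ) * u‖ ≤ m / r * ‖u‖ := by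
  rw [norm_mul, Complex.norm_real, Real.norm_eq_abs, abs_mul, abs_of_nonneg (by positivity)]
  gcongr
  exact mul_le_of_le_one_right (by positivity) (abs_h3f_le_one hr)

lemma norm_L0op_le {r : ℝ} (hr : 0 < r) : ‖L0op m z dz r‖ ≤ ‖dz r‖ + m / r * ‖z r‖ :=
  (norm_add_le _ _).trans (add_le_add_right (norm_potential_mul_le hr _) _)

lemma norm_deriv_le_norm_L0op_add {r : ℝ} (hr : 0 < r) :
    ‖dz r‖ ≤ ‖L0op m z dz r‖ + m / r * ‖z r‖ := by
  have hsub : dz r = L0op m z dz r - ((m / r * h3f m r : ℝ) : ℂ) * z r :=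
    (add_sub_cancel_right _ _).symm
  rw [hsub]
  exact (norm_sub_le _ _).trans (add_le_add_right (norm_potential_mul_le hr _) _)

lemma LocACC.hasACDeriv_inv_h1f_smul (hz : LocACC z dz) (ha : 0 < a) (hab : a ≤ b) :
    HasACDeriv (fun x => (h1f m x)⁻¹ • z x) (fun x => (h1f m x)⁻¹ • L0op m z dz x) a b := by
  have hpos : uIcc a b ⊆ Ioi 0 := fun x hx => ha.trans_le (uIcc_of_le hab ▸ hx).1
  have hinv : HasACDeriv (fun x => (h1f m x)⁻¹) (fun x => m / x * h3f m x * (h1f m x)⁻¹) a b :=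
    .of_hasDerivAt (fun x hx => hasDerivAt_inv_h1f (hpos hx))
      ((((continuousOn_const.div continuousOn_id fun x (hx : 0 < x) => hx.ne').mul
        continuousOn_h3f).mul continuousOn_inv_h1f).mono hpos)
  convert hinv.smul (hz.hasACDeriv ha hab) using 2 with x
  simp only [L0op, Complex.real_smul]
  push_cast
  ring

end LocACC

section Remainder

/-- The part of `z` left after subtracting the multiple of the kernel element `h₁` of `L₀` that
agrees with `z` at `1`, where `h₁ = 1`. -/
def h1Remainder (m : ℕ) (z : ℝ → ℂ) (r : ℝ) : ℂ := z r - h1f m r * z 1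

variable {m : ℕ} {z dz : ℝ → ℂ} {a b r : ℝ} {k : ℤ}

lemma h1Remainder_eq_smul (hr : 0 < r) :
    h1Remainder m z r = h1f m r • ((h1f m r)⁻¹ • z r - z 1) := by
  rw [smul_sub, smul_inv_smul₀ (h1f_pos hr).ne', Complex.real_smul, h1Remainder]

lemma LocACC.continuousOn_h1Remainder (hz : LocACC z dz) :
    ContinuousOn (h1Remainder m z) (Ioi 0) :=
  hz.continuousOn.sub
    ((Complex.continuous_ofReal.comp_continuousOn continuousOn_h1f).mul continuousOn_const)

lemma LocACC.intervalIntegrable_h1Remainder_div_sq (hz : LocACC z dz) (ha : 0 < a) (hab : a ≤ b) :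
    IntervalIntegrable (fun r => (‖h1Remainder m z r‖ / r ^ 2) ^ 2 * r) volume a b := by
  have hcont : ContinuousOn (fun r => (‖h1Remainder m z r‖ / r ^ 2) ^ 2 * r) (Ioi 0) :=
    ((hz.continuousOn_h1Remainder.norm.div (continuousOn_id.pow 2)
      fun _ hr => pow_ne_zero 2 (ne_of_gt hr)).pow 2).mul continuousOn_id
  exact (hcont.mono fun _ hx => ha.trans_le hx.1).intervalIntegrable_of_Icc hab

lemma rpow_two_mul_sub_two (hr : 0 < r) : r ^ (2 * k - 2 : ℝ) = (r ^ k) ^ 2 / r ^ 2 := by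
  rw [rpow_sub hr, mul_comm, rpow_mul hr.le, rpow_intCast, rpow_two, rpow_two]

lemma two_div_two_mul_sub_two_sq_le_one (hk : k ≠ 1) : (2 / (2 * k - 2 : ℝ)) ^ 2 ≤ 1 := by
  have hsq : (1 : ℤ) ≤ (k - 1) ^ 2 := Int.add_one_le_of_lt (sq_pos_of_ne_zero (sub_ne_zero.mpr hk))
  have hsq' : (1 : ℝ) ≤ (k - 1) ^ 2 := mod_cast hsq
  rw [div_pow, div_le_one (by nlinarith)]
  linarith

lemma norm_h1Remainder_div_sq_le (hr : 0 < r) (hk : h1f m r ≤ 2 * r ^ k) :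
    (‖h1Remainder m z r‖ / r ^ 2) ^ 2 * r
      ≤ 4 * (r ^ (2 * k - 2 : ℝ) * (‖(h1f m r)⁻¹ • z r - z 1‖ ^ 2 / r)) := by
  rw [h1Remainder_eq_smul hr, norm_smul, Real.norm_of_nonneg (h1f_pos hr).le,
    rpow_two_mul_sub_two hr]
  calc _ ≤ (2 * r ^ k * ‖(h1f m r)⁻¹ • z r - z 1‖ / r ^ 2) ^ 2 * r := by
        have := (h1f_pos (m := m) hr).le
        gcongr
    _ = _ := by field_simp; norm_num [mul_comm]

lemma rpow_mul_norm_inv_h1f_smul_sq_le (hr : 0 < r) (hk : r ^ k ≤ h1f m r) (u : ℂ) :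
    r ^ (2 * k - 2 : ℝ) * (r * ‖(h1f m r)⁻¹ • u‖ ^ 2) ≤ (‖u‖ / r) ^ 2 * r := by
  have hh := h1f_pos (m := m) hr
  rw [norm_smul, norm_inv, Real.norm_of_nonneg hh.le, rpow_two_mul_sub_two hr]
  calc _ ≤ h1f m r ^ 2 / r ^ 2 * (r * ((h1f m r)⁻¹ * ‖u‖) ^ 2) := by gcongr
    _ = _ := by field_simp

lemma LocACC.intervalIntegrable_rpow_mul_norm_inv_h1f_smul_sq (hz : LocACC z dz)
    (hG : IntegrableOn (fun r => (‖L0op m z dz r‖ / r) ^ 2 * r) (Ioi 0)) (ha : 0 < a) (hab : a ≤ b)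
    (hlower : ∀ x ∈ Icc a b, x ^ k ≤ h1f m x) :
    IntervalIntegrable
      (fun x => x ^ (2 * k - 2 : ℝ) * (x * ‖(h1f m x)⁻¹ • L0op m z dz x‖ ^ 2)) volume a b := by
  have hpos : Icc a b ⊆ Ioi 0 := fun x hx => ha.trans_le hx.1
  rw [intervalIntegrable_iff_integrableOn_Icc_of_le hab]
  refine (hG.mono_set hpos).mono' ?_ ?_
  · have hrpow : ContinuousOn (fun x : ℝ => x ^ (2 * k - 2 : ℝ)) (Ioi 0) :=
      continuousOn_id.rpow_const fun x hx => .inl (ne_of_gt hx)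
    have hinv : AEStronglyMeasurable (fun x => (h1f m x)⁻¹) (volume.restrict (Ioi 0)) :=
      continuousOn_inv_h1f.aestronglyMeasurable measurableSet_Ioi
    exact ((hrpow.aestronglyMeasurable measurableSet_Ioi).mul (aestronglyMeasurable_id.mul
      ((hinv.smul hz.aestronglyMeasurable_L0op).norm.pow 2))).mono_set hpos
  · filter_upwards [ae_restrict_mem measurableSet_Icc] with x hx
    have hx0 : 0 < x := hpos hx
    rw [Real.norm_of_nonneg (by positivity)]
    exact rpow_mul_norm_inv_h1f_smul_sq_le hx0 (hlower x hx) _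

lemma LocACC.integral_h1Remainder_le_of_h1f_bounds (hz : LocACC z dz)
    (hG : IntegrableOn (fun r => (‖L0op m z dz r‖ / r) ^ 2 * r) (Ioi 0)) (ha : 0 < a) (hab : a ≤ b)
    (hlower : ∀ x ∈ Icc a b, x ^ k ≤ h1f m x) (hupper : ∀ x ∈ Icc a b, h1f m x ≤ 2 * x ^ k)
    (hend : k < 1 ∧ a = 1 ∨ 1 < k ∧ b = 1) :
    ∫ x in a..b, (‖h1Remainder m z x‖ / x ^ 2) ^ 2 * x
      ≤ 4 * ∫ x in a..b, (‖L0op m z dz x‖ / x) ^ 2 * x := by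
  have hpos : ∀ x ∈ Icc a b, 0 < x := fun x hx => ha.trans_le hx.1
  have hint := hz.intervalIntegrable_rpow_mul_norm_inv_h1f_smul_sq hG ha hab hlower
  set p : ℝ := 2 * k - 2
  set v : ℝ → ℂ := fun x => (h1f m x)⁻¹ • z x - z 1
  set v' : ℝ → ℂ := fun x => (h1f m x)⁻¹ • L0op m z dz x
  have hv : HasACDeriv v v' a b := (hz.hasACDeriv_inv_h1f_smul ha hab).sub_const (z 1)
  have hvend : p < 0 ∧ v a = 0 ∨ 0 < p ∧ v b = 0 := by
    have hv1 : v 1 = 0 := by simp [v, h1f_one]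
    rcases hend with ⟨hk, rfl⟩ | ⟨hk, rfl⟩
    · exact .inl ⟨by have : (k : ℝ) < 1 := mod_cast hk; linarith, hv1⟩
    · exact .inr ⟨by have : (1 : ℝ) < k := mod_cast hk; linarith, hv1⟩
  have hvcont : ContinuousOn v (Icc a b) := uIcc_of_le hab ▸ hv.1.continuousOn
  have hrpow : ContinuousOn (fun x : ℝ => x ^ p) (Icc a b) :=
    continuousOn_id.rpow_const fun x hx => .inl (hpos x hx).ne'
  calc ∫ x in a..b, (‖h1Remainder m z x‖ / x ^ 2) ^ 2 * x
      ≤ ∫ x in a..b, 4 * (x ^ p * (‖v x‖ ^ 2 / x)) := by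
        refine intervalIntegral.integral_mono_on hab ?_ ?_ fun x hx =>
          norm_h1Remainder_div_sq_le (hpos x hx) (hupper x hx)
        · exact hz.intervalIntegrable_h1Remainder_div_sq ha hab
        · exact (continuousOn_const.mul (hrpow.mul ((hvcont.norm.pow 2).div continuousOn_id
            fun x hx => (hpos x hx).ne'))).intervalIntegrable_of_Icc hab
    _ = 4 * ∫ x in a..b, x ^ p * (‖v x‖ ^ 2 / x) := intervalIntegral.integral_const_mul _ _
    _ ≤ 4 * ((2 / p) ^ 2 * ∫ x in a..b, x ^ p * (x * ‖v' x‖ ^ 2)) := by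
        gcongr
        exact hv.integral_rpow_mul_norm_sq_div_le ha hab hvend hint
    _ ≤ 4 * ((2 / p) ^ 2 * ∫ x in a..b, (‖L0op m z dz x‖ / x) ^ 2 * x) := by
        gcongr
        refine intervalIntegral.integral_mono_on hab hint ?_ fun x hx =>
          rpow_mul_norm_inv_h1f_smul_sq_le (hpos x hx) (hlower x hx) _
        exact (intervalIntegrable_iff_integrableOn_Icc_of_le hab).mpr (hG.mono_set hpos)
    _ ≤ 4 * (1 * ∫ x in a..b, (‖L0op m z dz x‖ / x) ^ 2 * x) := by
        have hnonneg : 0 ≤ ∫ x in a..b, (‖L0op m z dz x‖ / x) ^ 2 * x :=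
          intervalIntegral.integral_nonneg hab fun x hx =>
            mul_nonneg (sq_nonneg _) (hpos x hx).le
        gcongr
        exact two_div_two_mul_sub_two_sq_le_one (by lia)
    _ = 4 * ∫ x in a..b, (‖L0op m z dz x‖ / x) ^ 2 * x := by rw [one_mul]

lemma LocACC.intervalIntegral_h1Remainder_le (hm : 2 ≤ m) (hz : LocACC z dz)
    (hG : IntegrableOn (fun r => (‖L0op m z dz r‖ / r) ^ 2 * r) (Ioi 0)) (ha : 0 < a) (ha1 : a ≤ 1)
    (hb1 : 1 ≤ b) :
    ∫ r in a..b, (‖h1Remainder m z r‖ / r ^ 2) ^ 2 * r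
      ≤ 4 * ∫ r in a..b, (‖L0op m z dz r‖ / r) ^ 2 * r := by
  have hleft := hz.integral_h1Remainder_le_of_h1f_bounds hG ha ha1 (k := m)
    (fun x hx => zpow_le_h1f (ha.trans_le hx.1) hx.2)
    (fun x hx => h1f_le_two_mul_zpow (ha.trans_le hx.1)) (.inr ⟨by lia, rfl⟩)
  have hright := hz.integral_h1Remainder_le_of_h1f_bounds hG one_pos hb1 (k := -m)
    (fun x hx => zpow_neg_le_h1f hx.1)
    (fun x hx => h1f_le_two_mul_zpow_neg (one_pos.trans_le hx.1)) (.inl ⟨by lia, rfl⟩)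
  have hGint {c d : ℝ} (hc : 0 < c) (hcd : c ≤ d) :
      IntervalIntegrable (fun r => (‖L0op m z dz r‖ / r) ^ 2 * r) volume c d :=
    (intervalIntegrable_iff_integrableOn_Ioc_of_le hcd).mpr (hG.mono_set fun x hx => hc.trans hx.1)
  rw [← intervalIntegral.integral_add_adjacent_intervals
      (hz.intervalIntegrable_h1Remainder_div_sq ha ha1)
      (hz.intervalIntegrable_h1Remainder_div_sq one_pos hb1),
    ← intervalIntegral.integral_add_adjacent_intervals (hGint ha ha1) (hGint one_pos hb1), mul_add]
  exact add_le_add hleft hright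

lemma LocACC.integrableOn_and_integral_h1Remainder_le (hm : 2 ≤ m) (hz : LocACC z dz)
    (hG : IntegrableOn (fun r => (‖L0op m z dz r‖ / r) ^ 2 * r) (Ioi 0)) :
    IntegrableOn (fun r => (‖h1Remainder m z r‖ / r ^ 2) ^ 2 * r) (Ioi 0) ∧
      ∫ r in Ioi (0 : ℝ), (‖h1Remainder m z r‖ / r ^ 2) ^ 2 * r
        ≤ 4 * ∫ r in Ioi (0 : ℝ), (‖L0op m z dz r‖ / r) ^ 2 * r := by
  refine integrableOn_Ioi_and_integral_le_of_intervalIntegral_le one_pos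
    (fun a b ha hab => hz.intervalIntegrable_h1Remainder_div_sq ha hab)
    (fun x hx => by positivity) fun a b ha ha1 hb1 => ?_
  refine (hz.intervalIntegral_h1Remainder_le hm hG ha ha1 hb1).trans ?_
  have hsub : Ioc a b ⊆ Ioi 0 := fun x hx => ha.trans hx.1
  rw [intervalIntegral.integral_of_le (ha1.trans hb1)]
  exact mul_le_mul_of_nonneg_left (setIntegral_mono_set hG
    ((ae_restrict_mem measurableSet_Ioi).mono fun r (hr : 0 < r) => by positivity)
    hsub.eventuallyLE) zero_le_four

end Remainder

section Orthogonality

lemma norm_integral_mul_sq_le {α 𝕜 : Type*} [MeasurableSpace α] {μ : Measure α}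
    [RCLike 𝕜] {f g : α → 𝕜} (hf : MemLp f 2 μ) (hg : MemLp g 2 μ) :
    ‖∫ x, f x * g x ∂μ‖ ^ 2 ≤ (∫ x, ‖f x‖ ^ 2 ∂μ) * ∫ x, ‖g x‖ ^ 2 ∂μ := by
  have holder := integral_mul_norm_le_Lp_mul_Lq Real.HolderConjugate.two_two
    (by simpa using hf) (by simpa using hg)
  simp only [rpow_two, ← Real.sqrt_eq_rpow] at holder
  have hnorm : ‖∫ x, f x * g x ∂μ‖ ≤ ∫ x, ‖f x‖ * ‖g x‖ ∂μ :=
    (norm_integral_le_integral_norm _).trans_eq (by simp only [norm_mul])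
  refine (pow_le_pow_left₀ (norm_nonneg _) (hnorm.trans holder) 2).trans_eq ?_
  rw [mul_pow, Real.sq_sqrt (integral_nonneg fun x => sq_nonneg _),
    Real.sq_sqrt (integral_nonneg fun x => sq_nonneg _)]

lemma integrable_mul_and_norm_integral_mul_sq_le_of_weight {α 𝕜 : Type*} [MeasurableSpace α]
    {μ : Measure α} [RCLike 𝕜] {f g : α → 𝕜} {ω : α → ℝ} (hω : AEMeasurable ω μ)
    (hωpos : ∀ᵐ x ∂μ, 0 < ω x) (hf : AEStronglyMeasurable f μ) (hg : AEStronglyMeasurable g μ)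
    (hf2 : Integrable (fun x => ‖f x‖ ^ 2 * ω x) μ)
    (hg2 : Integrable (fun x => ‖g x‖ ^ 2 / ω x) μ) :
    Integrable (fun x => f x * g x) μ ∧
      ‖∫ x, f x * g x ∂μ‖ ^ 2 ≤ (∫ x, ‖f x‖ ^ 2 * ω x ∂μ) * ∫ x, ‖g x‖ ^ 2 / ω x ∂μ := by
  set F : α → 𝕜 := fun x => √(ω x) • f x
  set G : α → 𝕜 := fun x => (√(ω x))⁻¹ • g x
  have hFsq : (fun x => ‖f x‖ ^ 2 * ω x) =ᵐ[μ] fun x => ‖F x‖ ^ 2 := by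
    filter_upwards [hωpos] with x hx
    rw [norm_smul, mul_pow, Real.norm_eq_abs, sq_abs, sq_sqrt hx.le, mul_comm]
  have hGsq : (fun x => ‖g x‖ ^ 2 / ω x) =ᵐ[μ] fun x => ‖G x‖ ^ 2 := by
    filter_upwards [hωpos] with x hx
    rw [norm_smul, mul_pow, Real.norm_eq_abs, sq_abs, inv_pow, sq_sqrt hx.le, div_eq_inv_mul]
  have hFG : (fun x => F x * G x) =ᵐ[μ] fun x => f x * g x := by
    filter_upwards [hωpos] with x hx
    rw [smul_mul_smul_comm, mul_inv_cancel₀ (sqrt_pos.mpr hx).ne', one_smul]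
  have hF : MemLp F 2 μ :=
    (memLp_two_iff_integrable_sq_norm (hω.sqrt.aestronglyMeasurable.smul hf)).mpr (hf2.congr hFsq)
  have hG : MemLp G 2 μ :=
    (memLp_two_iff_integrable_sq_norm (hω.sqrt.inv.aestronglyMeasurable.smul hg)).mpr
      (hg2.congr hGsq)
  refine ⟨(hF.integrable_mul hG).congr hFG, ?_⟩
  rw [← integral_congr_ae hFG, integral_congr_ae hFsq, integral_congr_ae hGsq]
  exact norm_integral_mul_sq_le hF hG

variable {m : ℕ} {z dz : ℝ → ℂ} {r : ℝ}

lemma integrableOn_h1f_sq_mul (hm : 1 < m) :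
    IntegrableOn (fun r => h1f m r ^ 2 * r) (Ioi 0) := by
  have hm' : (1 : ℝ) < m := mod_cast hm
  simpa only [rpow_one] using
    integrableOn_h1f_sq_mul_rpow (m := m) (s := 1) (by linarith) (by linarith)

lemma integral_h1f_sq_mul_pos (hm : 1 < m) : 0 < ∫ r in Ioi (0 : ℝ), h1f m r ^ 2 * r := by
  have hpos (r : ℝ) (hr : 0 < r) : 0 < h1f m r ^ 2 * r := mul_pos (pow_pos (h1f_pos hr) 2) hr
  rw [setIntegral_pos_iff_support_of_nonneg_ae
    ((ae_restrict_mem measurableSet_Ioi).mono fun r hr => (hpos r hr).le)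
    (integrableOn_h1f_sq_mul hm)]
  have hsupport : Ioi 0 ⊆ Function.support fun r => h1f m r ^ 2 * r := fun r hr => (hpos r hr).ne'
  rw [inter_eq_self_of_subset_right hsupport, Real.volume_Ioi]
  exact ENNReal.zero_lt_top

lemma integrableOn_h1f_div_sq_sq_mul (hm : 1 < m) :
    IntegrableOn (fun r => (h1f m r / r ^ 2) ^ 2 * r) (Ioi 0) := by
  have hm' : (1 : ℝ) < m := mod_cast hm
  refine (integrableOn_h1f_sq_mul_rpow (m := m) (s := -3) (by linarith)
    (by linarith)).congr_fun (fun r (hr : 0 < r) => ?_) measurableSet_Ioi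
  simp only [rpow_neg hr.le, rpow_ofNat]
  field_simp

lemma integrableOn_sq_mul_h1f_sq_mul (hm : 3 < m) :
    IntegrableOn (fun r => (r ^ 2 * h1f m r) ^ 2 * r) (Ioi 0) := by
  have hm' : (3 : ℝ) < m := mod_cast hm
  refine (integrableOn_h1f_sq_mul_rpow (m := m) (s := 5) (by linarith)
    (by linarith)).congr_fun (fun r _ => ?_) measurableSet_Ioi
  simp only [rpow_ofNat]
  ring

lemma integral_h1Remainder_mul_h1f (hm : 1 < m)
    (hw : IntegrableOn (fun r => h1Remainder m z r * ((h1f m r * r : ℝ) : ℂ)) (Ioi 0))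
    (horth : (∫ r in Ioi (0 : ℝ), z r * ((h1f m r * r : ℝ) : ℂ)) = 0) :
    ∫ r in Ioi (0 : ℝ), h1Remainder m z r * ((h1f m r * r : ℝ) : ℂ)
      = -(z 1 * (∫ r in Ioi (0 : ℝ), h1f m r ^ 2 * r : ℝ)) := by
  have hh : IntegrableOn (fun r => z 1 * ((h1f m r ^ 2 * r : ℝ) : ℂ)) (Ioi 0) :=
    (integrableOn_h1f_sq_mul hm).ofReal.const_mul _
  have hsplit : (fun r => z r * ((h1f m r * r : ℝ) : ℂ)) = fun r =>
      h1Remainder m z r * ((h1f m r * r : ℝ) : ℂ) + z 1 * ((h1f m r ^ 2 * r : ℝ) : ℂ) := by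
    funext r
    simp only [h1Remainder]
    push_cast
    ring
  rw [hsplit, integral_add hw hh, integral_const_mul, integral_complex_ofReal] at horth
  exact eq_neg_of_add_eq_zero_left horth

lemma LocACC.norm_apply_one_mul_sq_le (hm : 3 < m) (hz : LocACC z dz)
    (hw : IntegrableOn (fun r => (‖h1Remainder m z r‖ / r ^ 2) ^ 2 * r) (Ioi 0))
    (horth : (∫ r in Ioi (0 : ℝ), z r * ((h1f m r * r : ℝ) : ℂ)) = 0) :
    (‖z 1‖ * ∫ r in Ioi (0 : ℝ), h1f m r ^ 2 * r) ^ 2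
      ≤ (∫ r in Ioi (0 : ℝ), (‖h1Remainder m z r‖ / r ^ 2) ^ 2 * r)
        * ∫ r in Ioi (0 : ℝ), (r ^ 2 * h1f m r) ^ 2 * r := by
  have hwsq : EqOn (fun r => (‖h1Remainder m z r‖ / r ^ 2) ^ 2 * r)
      (fun r => ‖h1Remainder m z r‖ ^ 2 * (r ^ 3)⁻¹) (Ioi 0) := by
    intro r (hr : 0 < r)
    field_simp
  have hhsq : EqOn (fun r => (r ^ 2 * h1f m r) ^ 2 * r)
      (fun r => ‖((h1f m r * r : ℝ) : ℂ)‖ ^ 2 / (r ^ 3)⁻¹) (Ioi 0) := by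
    intro r _
    simp only [Complex.norm_real, Real.norm_eq_abs, sq_abs, div_inv_eq_mul]
    ring
  obtain ⟨hint, hle⟩ := integrable_mul_and_norm_integral_mul_sq_le_of_weight
    (f := h1Remainder m z) (g := fun r => ((h1f m r * r : ℝ) : ℂ))
    (by fun_prop : AEMeasurable (fun r : ℝ => (r ^ 3)⁻¹) (volume.restrict (Ioi 0)))
    ((ae_restrict_mem measurableSet_Ioi).mono fun r (hr : 0 < r) => by positivity)
    (hz.continuousOn_h1Remainder.aestronglyMeasurable measurableSet_Ioi)
    ((Complex.continuous_ofReal.comp_continuousOn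
      (continuousOn_h1f.mul continuousOn_id)).aestronglyMeasurable measurableSet_Ioi)
    (hw.congr_fun hwsq measurableSet_Ioi)
    ((integrableOn_sq_mul_h1f_sq_mul hm).congr_fun hhsq measurableSet_Ioi)
  rw [setIntegral_congr_fun measurableSet_Ioi hwsq, setIntegral_congr_fun measurableSet_Ioi hhsq]
  rwa [integral_h1Remainder_mul_h1f (by lia) hint horth, norm_neg, norm_mul, Complex.norm_real,
    Real.norm_of_nonneg (integral_h1f_sq_mul_pos (by lia)).le] at hle

lemma norm_div_sq_sq_mul_le (hr : 0 < r) :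
    (‖z r‖ / r ^ 2) ^ 2 * r ≤ 2 * ((‖h1Remainder m z r‖ / r ^ 2) ^ 2 * r)
      + 2 * ‖z 1‖ ^ 2 * ((h1f m r / r ^ 2) ^ 2 * r) := by
  have htri : ‖z r‖ ≤ ‖h1Remainder m z r‖ + h1f m r * ‖z 1‖ := by
    have := norm_add_le (h1Remainder m z r) (h1f m r * z 1)
    rwa [h1Remainder, sub_add_cancel, norm_mul, Complex.norm_real,
      Real.norm_of_nonneg (h1f_pos hr).le] at this
  calc (‖z r‖ / r ^ 2) ^ 2 * r
      ≤ (‖h1Remainder m z r‖ / r ^ 2 + h1f m r * ‖z 1‖ / r ^ 2) ^ 2 * r := by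
        rw [← add_div]
        gcongr
    _ ≤ 2 * ((‖h1Remainder m z r‖ / r ^ 2) ^ 2 + (h1f m r * ‖z 1‖ / r ^ 2) ^ 2) * r := by
        gcongr
        exact add_sq_le
    _ = _ := by ring

lemma LocACC.integrableOn_and_integral_norm_div_sq_le (hm : 3 < m) (hz : LocACC z dz)
    (hw : IntegrableOn (fun r => (‖h1Remainder m z r‖ / r ^ 2) ^ 2 * r) (Ioi 0))
    (horth : (∫ r in Ioi (0 : ℝ), z r * ((h1f m r * r : ℝ) : ℂ)) = 0) :
    IntegrableOn (fun r => (‖z r‖ / r ^ 2) ^ 2 * r) (Ioi 0) ∧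
      ∫ r in Ioi (0 : ℝ), (‖z r‖ / r ^ 2) ^ 2 * r
        ≤ 2 * (1 + (∫ r in Ioi (0 : ℝ), (r ^ 2 * h1f m r) ^ 2 * r)
            * (∫ r in Ioi (0 : ℝ), (h1f m r / r ^ 2) ^ 2 * r)
            / (∫ r in Ioi (0 : ℝ), h1f m r ^ 2 * r) ^ 2)
          * ∫ r in Ioi (0 : ℝ), (‖h1Remainder m z r‖ / r ^ 2) ^ 2 * r := by
  have hz1 := hz.norm_apply_one_mul_sq_le hm hw horth
  have hmeas : AEStronglyMeasurable (fun r => (‖z r‖ / r ^ 2) ^ 2 * r) (volume.restrict (Ioi 0)) :=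
    (((hz.continuousOn.norm.div (continuousOn_id.pow 2) fun _ hr =>
      pow_ne_zero 2 (ne_of_gt hr)).pow 2).mul continuousOn_id).aestronglyMeasurable
      measurableSet_Ioi
  obtain ⟨hint, hle⟩ := integrableOn_and_setIntegral_le_of_le_add measurableSet_Ioi hmeas
    (fun r (hr : 0 < r) => by positivity) (fun r hr => norm_div_sq_sq_mul_le hr) hw
    (integrableOn_h1f_div_sq_sq_mul (m := m) (by lia))
  refine ⟨hint, hle.trans ?_⟩
  have hA := integral_h1f_sq_mul_pos (m := m) (by lia)
  have hH : 0 ≤ ∫ r in Ioi (0 : ℝ), (h1f m r / r ^ 2) ^ 2 * r :=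
    setIntegral_nonneg measurableSet_Ioi fun r (hr : 0 < r) => by positivity
  set A := ∫ r in Ioi (0 : ℝ), h1f m r ^ 2 * r
  set B := ∫ r in Ioi (0 : ℝ), (r ^ 2 * h1f m r) ^ 2 * r
  set H := ∫ r in Ioi (0 : ℝ), (h1f m r / r ^ 2) ^ 2 * r
  set W := ∫ r in Ioi (0 : ℝ), (‖h1Remainder m z r‖ / r ^ 2) ^ 2 * r
  calc 2 * W + 2 * ‖z 1‖ ^ 2 * H ≤ 2 * W + 2 * (W * B / A ^ 2) * H := by
        gcongr
        rwa [le_div_iff₀ (by positivity), ← mul_pow]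
    _ = 2 * (1 + B * H / A ^ 2) * W := by ring

end Orthogonality

section Coercivity

variable {m : ℕ} {z dz : ℝ → ℂ} {r : ℝ}

lemma exists_integral_norm_div_sq_le (hm : 3 < m) :
    ∃ K > 0, ∀ z dz : ℝ → ℂ, LocACC z dz →
      IntegrableOn (fun r => (‖L0op m z dz r‖ / r) ^ 2 * r) (Ioi 0) →
      (∫ r in Ioi (0 : ℝ), z r * ((h1f m r * r : ℝ) : ℂ)) = 0 →
      IntegrableOn (fun r => (‖z r‖ / r ^ 2) ^ 2 * r) (Ioi 0) ∧
        ∫ r in Ioi (0 : ℝ), (‖z r‖ / r ^ 2) ^ 2 * r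
          ≤ K * ∫ r in Ioi (0 : ℝ), (‖L0op m z dz r‖ / r) ^ 2 * r := by
  set K := 2 * (1 + (∫ r in Ioi (0 : ℝ), (r ^ 2 * h1f m r) ^ 2 * r)
    * (∫ r in Ioi (0 : ℝ), (h1f m r / r ^ 2) ^ 2 * r)
    / (∫ r in Ioi (0 : ℝ), h1f m r ^ 2 * r) ^ 2)
  have hKpos : 0 < K := by
    have hB : 0 ≤ ∫ r in Ioi (0 : ℝ), (r ^ 2 * h1f m r) ^ 2 * r :=
      setIntegral_nonneg measurableSet_Ioi fun r (hr : 0 < r) => by positivity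
    have hH : 0 ≤ ∫ r in Ioi (0 : ℝ), (h1f m r / r ^ 2) ^ 2 * r :=
      setIntegral_nonneg measurableSet_Ioi fun r (hr : 0 < r) => by positivity
    positivity
  refine ⟨K * 4, by positivity, fun z dz hz hG horth => ?_⟩
  obtain ⟨hw, hwle⟩ := hz.integrableOn_and_integral_h1Remainder_le (by lia) hG
  obtain ⟨hZ, hZle⟩ := hz.integrableOn_and_integral_norm_div_sq_le hm hw horth
  exact ⟨hZ, hZle.trans ((mul_le_mul_of_nonneg_left hwle hKpos.le).trans_eq
    (mul_assoc _ _ _).symm)⟩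

lemma sq_mul_le_of_le_div_add {x y u M : ℝ} (hr : 0 < r) (hx : 0 ≤ x)
    (h : x ≤ y / r + M * (u / r ^ 2)) :
    x ^ 2 * r ≤ 2 * ((y / r) ^ 2 * r) + 2 * M ^ 2 * ((u / r ^ 2) ^ 2 * r) := by
  calc x ^ 2 * r ≤ 2 * ((y / r) ^ 2 + (M * (u / r ^ 2)) ^ 2) * r := by
        gcongr
        exact (pow_le_pow_left₀ hx h 2).trans add_sq_le
    _ = _ := by ring

lemma LocACC.integrableOn_L0op_sq (hz : LocACC z dz)
    (hD : IntegrableOn (fun r => (‖dz r‖ / r) ^ 2 * r) (Ioi 0))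
    (hZ : IntegrableOn (fun r => (‖z r‖ / r ^ 2) ^ 2 * r) (Ioi 0)) :
    IntegrableOn (fun r => (‖L0op m z dz r‖ / r) ^ 2 * r) (Ioi 0) := by
  have hmeas : AEMeasurable (fun r => ‖L0op m z dz r‖) (volume.restrict (Ioi 0)) :=
    hz.aestronglyMeasurable_L0op.norm.aemeasurable
  have hle : ∀ r ∈ Ioi (0 : ℝ), (‖L0op m z dz r‖ / r) ^ 2 * r
      ≤ 2 * ((‖dz r‖ / r) ^ 2 * r) + 2 * (m : ℝ) ^ 2 * ((‖z r‖ / r ^ 2) ^ 2 * r) := by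
    intro r (hr : 0 < r)
    refine sq_mul_le_of_le_div_add hr (by positivity) ?_
    calc ‖L0op m z dz r‖ / r ≤ (‖dz r‖ + m / r * ‖z r‖) / r := by
          gcongr
          exact norm_L0op_le hr
      _ = ‖dz r‖ / r + m * (‖z r‖ / r ^ 2) := by field_simp
  exact (integrableOn_and_setIntegral_le_of_le_add measurableSet_Ioi
    (by fun_prop : AEMeasurable _ _).aestronglyMeasurable
    (fun r (hr : 0 < r) => by positivity) hle hD hZ).1

lemma LocACC.integrableOn_and_integral_norm_deriv_add_sq_le (hz : LocACC z dz)
    (hG : IntegrableOn (fun r => (‖L0op m z dz r‖ / r) ^ 2 * r) (Ioi 0))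
    (hZ : IntegrableOn (fun r => (‖z r‖ / r ^ 2) ^ 2 * r) (Ioi 0)) :
    IntegrableOn (fun r => (‖dz r‖ / r + ‖z r‖ / r ^ 2) ^ 2 * r) (Ioi 0) ∧
      ∫ r in Ioi (0 : ℝ), (‖dz r‖ / r + ‖z r‖ / r ^ 2) ^ 2 * r
        ≤ 2 * (∫ r in Ioi (0 : ℝ), (‖L0op m z dz r‖ / r) ^ 2 * r)
          + 2 * (m + 1) ^ 2 * ∫ r in Ioi (0 : ℝ), (‖z r‖ / r ^ 2) ^ 2 * r := by
  have hz_meas : AEMeasurable (fun r => ‖z r‖) (volume.restrict (Ioi 0)) :=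
    (hz.continuousOn.norm.aestronglyMeasurable measurableSet_Ioi).aemeasurable
  have hdz_meas : AEMeasurable (fun r => ‖dz r‖) (volume.restrict (Ioi 0)) :=
    hz.aestronglyMeasurable_deriv.norm.aemeasurable
  refine integrableOn_and_setIntegral_le_of_le_add measurableSet_Ioi
    (by fun_prop : AEMeasurable _ _).aestronglyMeasurable
    (fun r (hr : 0 < r) => by positivity) (fun r (hr : 0 < r) => ?_) hG hZ
  refine sq_mul_le_of_le_div_add hr (by positivity) ?_
  calc ‖dz r‖ / r + ‖z r‖ / r ^ 2
      ≤ (‖L0op m z dz r‖ + m / r * ‖z r‖) / r + ‖z r‖ / r ^ 2 := by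
        gcongr
        exact norm_deriv_le_norm_L0op_add hr
    _ = _ := by field_simp; ring

end Coercivity

theorem statement11_general (m : ℕ) (hm : 3 < m) :
    ∃ C > (0 : ℝ), ∀ z dz : ℝ → ℂ,
      LocACC z dz →
      IntegrableOn (fun ρ => (‖L0op m z dz ρ‖ / ρ) ^ 2 * ρ) (Ioi (0 : ℝ)) →
      (∫ ρ in Ioi (0 : ℝ), z ρ * ((h1f m ρ * ρ : ℝ) : ℂ)) = 0 →
      IntegrableOn (fun ρ => (‖dz ρ‖ / ρ + ‖z ρ‖ / ρ ^ 2) ^ 2 * ρ) (Ioi (0 : ℝ)) ∧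
        √(∫ ρ in Ioi (0 : ℝ), (‖dz ρ‖ / ρ + ‖z ρ‖ / ρ ^ 2) ^ 2 * ρ)
          ≤ C * √(∫ ρ in Ioi (0 : ℝ), (‖L0op m z dz ρ‖ / ρ) ^ 2 * ρ) := by
  obtain ⟨K, hK, hcoercive⟩ := exists_integral_norm_div_sq_le hm
  refine ⟨√(2 + 2 * (m + 1) ^ 2 * K), by positivity, fun z dz hz hG horth => ?_⟩
  obtain ⟨hZ, hZle⟩ := hcoercive z dz hz hG horth
  obtain ⟨hint, hle⟩ := hz.integrableOn_and_integral_norm_deriv_add_sq_le hG hZ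
  refine ⟨hint, ?_⟩
  rw [← Real.sqrt_mul (by positivity)]
  refine Real.sqrt_le_sqrt (hle.trans ?_)
  rw [add_mul, mul_assoc _ K]
  gcongr

/-- **Weighted coercivity of L₀ under orthogonality to h₁.** For m > 3 there is
C = C(m) such that if z has finite X-norm, z'/ρ and z/ρ² lie in L²(ρ dρ), and
∫ z h₁ ρ dρ = 0, then ‖|z'|/ρ + |z|/ρ²‖_{L²(ρ dρ)} ≤ C ‖(L₀z)/ρ‖_{L²(ρ dρ)}. -/
theorem statement11 (m : ℕ) (hm : 3 < m) :
    ∃ C > (0:ℝ), ∀ z dz : ℝ → ℂ,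
      LocACC z dz →
      IntegrableOn (xDen z dz) (Ioi (0:ℝ)) →
      IntegrableOn (fun ρ => (‖dz ρ‖ / ρ) ^ 2 * ρ) (Ioi (0:ℝ)) →
      IntegrableOn (fun ρ => (‖z ρ‖ / ρ ^ 2) ^ 2 * ρ) (Ioi (0:ℝ)) →
      (∫ ρ in Ioi (0:ℝ), z ρ * ((h1f m ρ * ρ : ℝ) : ℂ)) = 0 →
      Real.sqrt (∫ ρ in Ioi (0:ℝ), (‖dz ρ‖ / ρ + ‖z ρ‖ / ρ ^ 2) ^ 2 * ρ)
        ≤ C * Real.sqrt (∫ ρ in Ioi (0:ℝ), (‖L0op m z dz ρ‖ / ρ) ^ 2 * ρ) := by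
  obtain ⟨C, hC, hbound⟩ := statement11_general m hm
  exact ⟨C, hC, fun z dz hz _ hD hZ horth =>
    (hbound z dz hz (hz.integrableOn_L0op_sq hD hZ) horth).2⟩

end
end

section
/- Let V ∈ C^∞((0,∞)) satisfy 0 ≤ r²V(r) ≤ c₀ for all r > 0 and the repulsivity condition 1 − r²(rV(r))' ≥ ν for some ν > 0. Then there is a constant C depending only on ν and c₀ such that the following a priori weighted resolvent estimate holds uniformly in μ ∈ ℂ with Im μ ≠ 0: if v ∈ H²(ℝ²) has the form v(x) = e^{iθ}w(r) in polar coordinates (so that automatically v/|x| ∈ L²(ℝ²)), and f := (−Δ + V − μ)v satisfies |x| f ∈ L²(ℝ²), then ‖v/|x|‖_{L²(ℝ²)} ≤ C ‖ |x| f ‖_{L²(ℝ²)}. Equivalently, for the Schrödinger operator H = −Δ + 1/r² + V acting on radial functions u(r) = e^{−iθ}v, one has the uniform bound ‖(1/|x|)(H−μ)^{−1} g‖_{L²} ≤ C ‖|x| g‖_{L²} for radial g. -/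
open MeasureTheory Set Real Filter
open scoped ENNReal

noncomputable section

/-!
The Liouville transform `h = r^{1/2} w` turns the equation for `w` into `-h'' + (Q - μ) h = g` on
the half-line, with `Q = V + 3 / (4 r²)` and `g = r^{1/2} f`. Choose `κ² = μ` with `Im κ ≥ 0` and
put `D = h' - iκh`, so that `D' = Q h - g - iκ D`. In the derivative of the virial
`r |D|² - (r Q + 1 / (2 r)) |h|²` all contributions of `κ` are nonnegative when `r² Q ≥ -1/2`,
which is the source of the uniformity in `μ`. The term `1 / (2 r)` builds in Hardy's inequality
`|D|² - (|h|² / (2 r))' ≥ |h|² / (4 r²)`, so that repulsivity leaves a net gain of `ν |h|² / r²`,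
against which the source term `-2 r Re ⟨D, g⟩` is absorbed by Young's inequality. Finite energy
makes the boundary values of the virial harmless along suitable sequences tending to `0` and `∞`.
-/

section BoundaryTerms

open scoped Topology

lemma not_integrableAtFilter_inv_atTop :
    ¬ IntegrableAtFilter (fun r : ℝ => r⁻¹) atTop := by
  rintro ⟨s, hs, hint⟩
  obtain ⟨a, ha⟩ := mem_atTop_sets.1 hs
  exact not_integrableOn_Ici_inv (a := a) (hint.mono_set ha)

lemma not_integrableAtFilter_inv_nhdsGT_zero :
    ¬ IntegrableAtFilter (fun r : ℝ => r⁻¹) (𝓝[>] 0) := by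
  rintro ⟨s, hs, hint⟩
  obtain ⟨b, hb, hbs⟩ := mem_nhdsGT_iff_exists_Ioc_subset.1 hs
  have hb : (0 : ℝ) < b := hb
  have hint' : IntervalIntegrable (fun r : ℝ => r⁻¹) volume 0 b :=
    (intervalIntegrable_iff_integrableOn_Ioc_of_le hb.le).2 (hint.mono_set hbs)
  simp [intervalIntegrable_inv_iff, hb.ne] at hint'

lemma frequently_lt_of_integrableAtFilter_div {l : Filter ℝ} [l.IsMeasurablyGenerated] {A : ℝ → ℝ}
    {ε : ℝ} (hl : ¬ IntegrableAtFilter (fun r : ℝ => r⁻¹) l)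
    (hA : IntegrableAtFilter (fun r => A r / r) l) (hε : 0 < ε) : ∃ᶠ r in l, A r < ε := by
  intro hAε
  refine hl (Asymptotics.IsBigO.integrableAtFilter (.of_bound ε⁻¹ ?_)
    measurable_inv.aestronglyMeasurable.stronglyMeasurableAtFilter hA)
  filter_upwards [hAε] with r hr
  have hεA : ε ≤ ‖A r‖ := (not_lt.1 hr).trans (le_abs_self _)
  calc ‖r⁻¹‖ = ε⁻¹ * (ε * ‖r⁻¹‖) := (inv_mul_cancel_left₀ hε.ne' _).symm
    _ ≤ ε⁻¹ * (‖A r‖ * ‖r⁻¹‖) := by gcongr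
    _ = ε⁻¹ * ‖A r / r‖ := by rw [div_eq_mul_inv, norm_mul]

lemma tendsto_setIntegral_Ioc_nhdsGT_prod_atTop {F : ℝ → ℝ} {a : ℝ} (hF : IntegrableOn F (Ioi a)) :
    Tendsto (fun p : ℝ × ℝ => ∫ r in Ioc p.1 p.2, F r) (𝓝[>] a ×ˢ atTop)
      (𝓝 (∫ r in Ioi a, F r)) := by
  have hcover : AECover (volume.restrict (Ioi a)) (𝓝[>] a ×ˢ atTop)
      fun p : ℝ × ℝ => Ioc p.1 p.2 :=
    (aecover_Ioi_of_Ioi (tendsto_fst.mono_right nhdsWithin_le_nhds)).inter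
      (aecover_Iic tendsto_snd)
  refine (hcover.integral_tendsto_of_countably_generated hF).congr' ?_
  filter_upwards [tendsto_fst.eventually self_mem_nhdsWithin] with p hp
  rw [Measure.restrict_restrict measurableSet_Ioc,
    inter_eq_left.2 (Ioc_subset_Ioi_self.trans (Ioi_subset_Ioi (le_of_lt hp)))]

lemma setIntegral_Ioi_nonpos_of_le_deriv {F P P' A B : ℝ → ℝ} (hF : IntegrableOn F (Ioi 0))
    (hP : ∀ r ∈ Ioi (0 : ℝ), HasDerivAt P (P' r) r) (hFP : ∀ r ∈ Ioi (0 : ℝ), F r ≤ P' r)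
    (hPA : ∀ r ∈ Ioi (0 : ℝ), P r ≤ A r) (hA : IntegrableOn (fun r => A r / r) (Ioi 0))
    (hBP : ∀ r ∈ Ioi (0 : ℝ), -B r ≤ P r) (hB : IntegrableOn (fun r => B r / r) (Ioi 0)) :
    ∫ r in Ioi (0 : ℝ), F r ≤ 0 := by
  refine le_of_forall_pos_le_add fun ε hε => ?_
  have hBzero : ∃ᶠ s in 𝓝[>] (0 : ℝ), B s < ε / 2 :=
    frequently_lt_of_integrableAtFilter_div not_integrableAtFilter_inv_nhdsGT_zero
      ⟨_, self_mem_nhdsWithin, hB⟩ (half_pos hε)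
  have hAtop : ∃ᶠ t in atTop, A t < ε / 2 :=
    frequently_lt_of_integrableAtFilter_div not_integrableAtFilter_inv_atTop
      ⟨_, Ioi_mem_atTop 0, hA⟩ (half_pos hε)
  have hord : ∀ᶠ p : ℝ × ℝ in 𝓝[>] 0 ×ˢ atTop, p.1 ∈ Ioc (0 : ℝ) 1 ∧ 1 ≤ p.2 :=
    prod_mem_prod (Ioc_mem_nhdsGT one_pos) (Ici_mem_atTop 1)
  refine le_of_tendsto_of_frequently (tendsto_setIntegral_Ioc_nhdsGT_prod_atTop hF)
    (((frequently_prod_and.2 ⟨hBzero, hAtop⟩).and_eventually hord).mono ?_)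
  rintro ⟨s, t⟩ ⟨⟨hBs, hAt⟩, ⟨hs, hs1⟩, ht1⟩
  have hst : s ≤ t := hs1.trans ht1
  have hsub : Icc s t ⊆ Ioi 0 := fun r hr => hs.trans_le hr.1
  have hFTC : ∫ r in s..t, F r ≤ P t - P s :=
    intervalIntegral.integral_le_sub_of_hasDeriv_right_of_le hst
      (fun r hr => (hP r (hsub hr)).continuousAt.continuousWithinAt)
      (fun r hr => (hP r (hsub (Ioo_subset_Icc_self hr))).hasDerivWithinAt)
      (hF.mono_set hsub) (fun r hr => hFP r (hsub (Ioo_subset_Icc_self hr)))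
  rw [intervalIntegral.integral_of_le hst] at hFTC
  linarith [hPA t (hs.trans_le hst), hBP s hs]

end BoundaryTerms

section HalfLine

/-- Finiteness of the energy of a profile `h` with derivative `dh` for the half-line Schrödinger
operator `-d²/dr² + Q`. The inverse-square part is listed separately, since `Q` may have it with any
coefficient, or not at all. -/
structure HasFiniteEnergy (Q : ℝ → ℝ) (h dh : ℝ → ℂ) : Prop where
  normSq : IntegrableOn (fun r => ‖h r‖ ^ 2) (Ioi 0)
  deriv : IntegrableOn (fun r => ‖dh r‖ ^ 2) (Ioi 0)
  inverseSquare : IntegrableOn (fun r => ‖h r‖ ^ 2 / r ^ 2) (Ioi 0)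
  potential : IntegrableOn (fun r => Q r * ‖h r‖ ^ 2) (Ioi 0)

/-- The Sommerfeld derivative `h' - iκh`, which vanishes on the outgoing wave `e^{iκr}`. The
derivative of `h` is passed as `dh`. -/
def outgoingDeriv (κ : ℂ) (h dh : ℝ → ℂ) (r : ℝ) : ℂ := dh r - Complex.I * κ * h r

/-- The virial functional whose monotonicity yields the resolvent estimate. The summand
`(2 * r)⁻¹` is the optimal weight in Hardy's inequality. -/
def virial (Q : ℝ → ℝ) (κ : ℂ) (h dh : ℝ → ℂ) (r : ℝ) : ℝ :=
  r * ‖outgoingDeriv κ h dh r‖ ^ 2 - (r * Q r + (2 * r)⁻¹) * ‖h r‖ ^ 2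

lemma virial_weight_nonneg {r q : ℝ} (hr : 0 < r) (hq : -1 / 2 ≤ r ^ 2 * q) :
    0 ≤ r * q + (2 * r)⁻¹ := by
  have : r * q + (2 * r)⁻¹ = (r ^ 2 * q + 1 / 2) / r := by field_simp
  rw [this]
  exact div_nonneg (by linarith) hr.le

lemma exists_sq_eq_im_nonneg (μ : ℂ) : ∃ κ : ℂ, κ ^ 2 = μ ∧ 0 ≤ κ.im := by
  obtain ⟨z, hz⟩ := IsAlgClosed.exists_pow_nat_eq μ two_pos
  rcases le_total 0 z.im with hz_im | hz_im
  · exact ⟨z, hz, hz_im⟩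
  · exact ⟨-z, by rw [neg_sq, hz], by simpa using hz_im⟩

lemma inner_I_mul_mul_self (κ z : ℂ) : inner ℝ z (Complex.I * κ * z) = -κ.im * ‖z‖ ^ 2 := by
  simp only [Complex.inner, Complex.sq_norm, Complex.normSq_apply, Complex.mul_re, Complex.mul_im,
    Complex.conj_re, Complex.conj_im, Complex.I_re, Complex.I_im]
  ring

lemma le_norm_sq_sub_inner_add_sub_inner {E : Type*} [NormedAddCommGroup E]
    [InnerProductSpace ℝ E] {ν : ℝ} (hν : 0 < ν) (x y z : E) :
    ν / 2 * ‖y‖ ^ 2 - (1 + (2 * ν)⁻¹) * ‖z‖ ^ 2 ≤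
      ‖x‖ ^ 2 - inner ℝ y x + (1 / 4 + ν) * ‖y‖ ^ 2 - 2 * inner ℝ x z := by
  have hHardy : ‖x - (1 / 2 : ℝ) • y - z‖ ^ 2 =
      ‖x‖ ^ 2 + ‖y‖ ^ 2 / 4 + ‖z‖ ^ 2 - inner ℝ y x - 2 * inner ℝ x z + inner ℝ y z := by
    simp only [← real_inner_self_eq_norm_sq, inner_sub_left, inner_sub_right, real_inner_smul_left,
      real_inner_smul_right, real_inner_comm x y, real_inner_comm x z, real_inner_comm y z]
    ring
  have hYoung : (2 * ν)⁻¹ * ‖ν • y - z‖ ^ 2 =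
      ν / 2 * ‖y‖ ^ 2 - inner ℝ y z + (2 * ν)⁻¹ * ‖z‖ ^ 2 := by
    rw [norm_sub_sq_real, norm_smul, mul_pow, Real.norm_of_nonneg hν.le, real_inner_smul_left]
    field_simp
  have hYoung_nonneg : 0 ≤ (2 * ν)⁻¹ * ‖ν • y - z‖ ^ 2 := by positivity
  linarith [sq_nonneg ‖x - (1 / 2 : ℝ) • y - z‖]

section Pointwise

variable {Q : ℝ → ℝ} {κ : ℂ} {h dh : ℝ → ℂ} {r Q' : ℝ} {g : ℂ}

lemma hasDerivAt_outgoingDeriv {q : ℝ} (hh : HasDerivAt h (dh r) r)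
    (hdh : HasDerivAt dh (q • h r - κ ^ 2 * h r - g) r) :
    HasDerivAt (outgoingDeriv κ h dh)
      (q • h r - g - Complex.I * κ * outgoingDeriv κ h dh r) r := by
  refine (hdh.sub (hh.const_mul (Complex.I * κ))).congr_deriv ?_
  linear_combination (norm := (simp only [outgoingDeriv]; ring)) -(κ ^ 2 * h r) * Complex.I_sq

lemma hasDerivAt_norm_sq_of_outgoingDeriv (hh : HasDerivAt h (dh r) r) :
    HasDerivAt (fun s => ‖h s‖ ^ 2)
      (2 * inner ℝ (h r) (outgoingDeriv κ h dh r) - 2 * κ.im * ‖h r‖ ^ 2) r := by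
  refine hh.norm_sq.congr_deriv ?_
  rw [← sub_add_cancel (dh r) (Complex.I * κ * h r), inner_add_right, inner_I_mul_mul_self,
    outgoingDeriv]
  ring

lemma hasDerivAt_norm_sq_outgoingDeriv {q : ℝ} (hh : HasDerivAt h (dh r) r)
    (hdh : HasDerivAt dh (q • h r - κ ^ 2 * h r - g) r) :
    HasDerivAt (fun s => ‖outgoingDeriv κ h dh s‖ ^ 2)
      (2 * q * inner ℝ (h r) (outgoingDeriv κ h dh r) - 2 * inner ℝ (outgoingDeriv κ h dh r) g
        + 2 * κ.im * ‖outgoingDeriv κ h dh r‖ ^ 2) r := by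
  refine (hasDerivAt_outgoingDeriv hh hdh).norm_sq.congr_deriv ?_
  rw [inner_sub_right, inner_sub_right, real_inner_smul_right, inner_I_mul_mul_self,
    real_inner_comm]
  ring

/-- The virial is chosen so that the terms `2 * r * Q r * inner ℝ h D` from its two summands
cancel. -/
lemma hasDerivAt_virial (hr : 0 < r) (hQ : HasDerivAt (fun s => s * Q s) Q' r)
    (hh : HasDerivAt h (dh r) r) (hdh : HasDerivAt dh (Q r • h r - κ ^ 2 * h r - g) r) :
    HasDerivAt (virial Q κ h dh)
      (‖outgoingDeriv κ h dh r‖ ^ 2 - r⁻¹ * inner ℝ (h r) (outgoingDeriv κ h dh r)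
        + (1 / (2 * r ^ 2) - Q') * ‖h r‖ ^ 2 - 2 * r * inner ℝ (outgoingDeriv κ h dh r) g
        + 2 * κ.im * (r * ‖outgoingDeriv κ h dh r‖ ^ 2 + (r * Q r + (2 * r)⁻¹) * ‖h r‖ ^ 2)) r := by
  have hinv : HasDerivAt (fun s : ℝ => (2 * s)⁻¹) (-(2 * 1) / (2 * r) ^ 2) r :=
    ((hasDerivAt_id r).const_mul 2).inv (by positivity)
  refine (((hasDerivAt_id r).mul (hasDerivAt_norm_sq_outgoingDeriv hh hdh)).sub
    ((hQ.add hinv).mul (hasDerivAt_norm_sq_of_outgoingDeriv (κ := κ) hh))).congr_deriv ?_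
  simp only [id, Pi.add_apply]
  field_simp
  ring

lemma virial_density_lower_bound {ν : ℝ} (hν : 0 < ν) (hr : 0 < r) (hκ : 0 ≤ κ.im)
    (hQ_lower : -1 / 2 ≤ r ^ 2 * Q r) (hQ' : ν ≤ 1 / 4 - r ^ 2 * Q') (D z : ℂ) :
    ν / 2 * (‖z‖ ^ 2 / r ^ 2) - (1 + (2 * ν)⁻¹) * (r ^ 2 * ‖g‖ ^ 2) ≤
      ‖D‖ ^ 2 - r⁻¹ * inner ℝ z D + (1 / (2 * r ^ 2) - Q') * ‖z‖ ^ 2 - 2 * r * inner ℝ D g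
        + 2 * κ.im * (r * ‖D‖ ^ 2 + (r * Q r + (2 * r)⁻¹) * ‖z‖ ^ 2) := by
  have hweight := virial_weight_nonneg hr hQ_lower
  have hκ_term : 0 ≤ 2 * κ.im * (r * ‖D‖ ^ 2 + (r * Q r + (2 * r)⁻¹) * ‖z‖ ^ 2) := by positivity
  have hrepulsive : (1 / 4 + ν) * (‖z‖ ^ 2 / r ^ 2) ≤ (1 / (2 * r ^ 2) - Q') * ‖z‖ ^ 2 := by
    have : (1 / (2 * r ^ 2) - Q') * ‖z‖ ^ 2 = (1 / 2 - r ^ 2 * Q') * (‖z‖ ^ 2 / r ^ 2) := by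
      field_simp
    rw [this]
    gcongr
    linarith
  have hquadratic := le_norm_sq_sub_inner_add_sub_inner hν D (r⁻¹ • z) (r • g)
  simp only [norm_smul, real_inner_smul_left, real_inner_smul_right, mul_pow, norm_inv, inv_pow,
    Real.norm_of_nonneg hr.le, inv_mul_eq_div _ (‖z‖ ^ 2)] at hquadratic
  linarith

end Pointwise

section Integrated

variable {Q : ℝ → ℝ} {κ : ℂ} {h dh : ℝ → ℂ}

lemma HasFiniteEnergy.integrableOn_norm_sq_outgoingDeriv (hE : HasFiniteEnergy Q h dh)
    (hh : ContinuousOn h (Ioi 0)) (hdh : ContinuousOn dh (Ioi 0)) :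
    IntegrableOn (fun r => ‖outgoingDeriv κ h dh r‖ ^ 2) (Ioi 0) := by
  have hh_meas := hh.aestronglyMeasurable (μ := volume) measurableSet_Ioi
  have hdh_meas := hdh.aestronglyMeasurable (μ := volume) measurableSet_Ioi
  have hmem : MemLp (outgoingDeriv κ h dh) 2 (volume.restrict (Ioi 0)) :=
    ((memLp_two_iff_integrable_sq_norm hdh_meas).2 hE.deriv).sub
      (((memLp_two_iff_integrable_sq_norm hh_meas).2 hE.normSq).const_mul (Complex.I * κ))
  exact (memLp_two_iff_integrable_sq_norm hmem.aestronglyMeasurable).1 hmem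

lemma HasFiniteEnergy.integrableOn_potential_add_inverseSquare (hE : HasFiniteEnergy Q h dh) :
    IntegrableOn (fun r => (r * Q r + (2 * r)⁻¹) * ‖h r‖ ^ 2 / r) (Ioi 0) := by
  refine IntegrableOn.congr_fun (hE.potential.add (hE.inverseSquare.const_mul (1 / 2)))
    (fun r (hr : 0 < r) => ?_) measurableSet_Ioi
  simp only [Pi.add_apply]
  field_simp

/-- In the radial reduction of `-Δ + V` on `ℝᵈ` at angular momentum `ℓ` one has
`Q = V + ((d - 1) * (d - 3) / 4 + ℓ * (ℓ + d - 2)) / r²`. -/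
theorem HasFiniteEnergy.integral_norm_sq_div_sq_le {Q' : ℝ → ℝ} {g : ℝ → ℂ} {ν : ℝ} {μ : ℂ}
    (hE : HasFiniteEnergy Q h dh) (hν : 0 < ν)
    (hQ : ∀ r ∈ Ioi (0 : ℝ), HasDerivAt (fun s => s * Q s) (Q' r) r)
    (hQ_lower : ∀ r ∈ Ioi (0 : ℝ), -1 / 2 ≤ r ^ 2 * Q r)
    (hQ' : ∀ r ∈ Ioi (0 : ℝ), ν ≤ 1 / 4 - r ^ 2 * Q' r)
    (hh : ∀ r ∈ Ioi (0 : ℝ), HasDerivAt h (dh r) r)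
    (hdh : ∀ r ∈ Ioi (0 : ℝ), HasDerivAt dh (Q r • h r - μ * h r - g r) r)
    (hg : IntegrableOn (fun r => r ^ 2 * ‖g r‖ ^ 2) (Ioi 0)) :
    ∫ r in Ioi (0 : ℝ), ‖h r‖ ^ 2 / r ^ 2 ≤
      (2 * ν + 1) / ν ^ 2 * ∫ r in Ioi (0 : ℝ), r ^ 2 * ‖g r‖ ^ 2 := by
  obtain ⟨κ, rfl, hκ⟩ := exists_sq_eq_im_nonneg μ
  have hD : IntegrableOn (fun r => ‖outgoingDeriv κ h dh r‖ ^ 2) (Ioi 0) :=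
    hE.integrableOn_norm_sq_outgoingDeriv
      (fun r hr => (hh r hr).continuousAt.continuousWithinAt)
      (fun r hr => (hdh r hr).continuousAt.continuousWithinAt)
  have hD_div : IntegrableOn (fun r => r * ‖outgoingDeriv κ h dh r‖ ^ 2 / r) (Ioi 0) :=
    hD.congr_fun (fun r (hr : 0 < r) => by field_simp) measurableSet_Ioi
  have hvirial_le (r : ℝ) (hr : r ∈ Ioi (0 : ℝ)) :
      virial Q κ h dh r ≤ r * ‖outgoingDeriv κ h dh r‖ ^ 2 := by
    have hweight := virial_weight_nonneg hr (hQ_lower r hr)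
    exact sub_le_self _ (by positivity)
  have hle_virial (r : ℝ) (hr : r ∈ Ioi (0 : ℝ)) :
      -((r * Q r + (2 * r)⁻¹) * ‖h r‖ ^ 2) ≤ virial Q κ h dh r := by
    have : 0 ≤ r * ‖outgoingDeriv κ h dh r‖ ^ 2 := mul_nonneg (le_of_lt hr) (sq_nonneg _)
    simp only [virial]
    linarith
  have hnonpos : ∫ r in Ioi (0 : ℝ),
      (ν / 2 * (‖h r‖ ^ 2 / r ^ 2) - (1 + (2 * ν)⁻¹) * (r ^ 2 * ‖g r‖ ^ 2)) ≤ 0 :=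
    setIntegral_Ioi_nonpos_of_le_deriv ((hE.inverseSquare.const_mul _).sub (hg.const_mul _))
      (fun r hr => hasDerivAt_virial hr (hQ r hr) (hh r hr) (hdh r hr))
      (fun r hr => virial_density_lower_bound hν hr hκ (hQ_lower r hr) (hQ' r hr) _ _)
      hvirial_le hD_div hle_virial hE.integrableOn_potential_add_inverseSquare
  rw [integral_sub (hE.inverseSquare.const_mul _) (hg.const_mul _), integral_const_mul,
    integral_const_mul, sub_nonpos] at hnonpos
  calc ∫ r in Ioi (0 : ℝ), ‖h r‖ ^ 2 / r ^ 2
      = 2 / ν * (ν / 2 * ∫ r in Ioi (0 : ℝ), ‖h r‖ ^ 2 / r ^ 2) := by field_simp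
    _ ≤ 2 / ν * ((1 + (2 * ν)⁻¹) * ∫ r in Ioi (0 : ℝ), r ^ 2 * ‖g r‖ ^ 2) := by gcongr
    _ = (2 * ν + 1) / ν ^ 2 * ∫ r in Ioi (0 : ℝ), r ^ 2 * ‖g r‖ ^ 2 := by field_simp

end Integrated

end HalfLine

section Liouville

/-- The Liouville transform `r^{1/2} w`, which removes the first-order term of the radial Laplacian
on `ℝ²` and carries `L²((0, ∞), r dr)` to `L²((0, ∞), dr)`. -/
def liouville (w : ℝ → ℂ) (r : ℝ) : ℂ := √r • w r

/-- The derivative of `liouville w`, where `dw` is the derivative of `w`. -/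
def liouvilleDeriv (w dw : ℝ → ℂ) (r : ℝ) : ℂ := √r • dw r + (2 * √r)⁻¹ • w r

variable {V : ℝ → ℝ} {w dw ddw : ℝ → ℂ} {r : ℝ}

lemma norm_sq_liouville (hr : 0 ≤ r) : ‖liouville w r‖ ^ 2 = ‖w r‖ ^ 2 * r := by
  rw [liouville, norm_smul, Real.norm_of_nonneg (sqrt_nonneg r), mul_pow, sq_sqrt hr, mul_comm]

lemma hasDerivAt_liouville (hr : 0 < r) (hw : HasDerivAt w (dw r) r) :
    HasDerivAt (liouville w) (liouvilleDeriv w dw r) r := by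
  refine ((hasDerivAt_sqrt hr.ne').smul hw).congr_deriv ?_
  rw [liouvilleDeriv, one_div]

lemma hasDerivAt_liouvilleDeriv (hr : 0 < r) (hw : HasDerivAt w (dw r) r)
    (hdw : HasDerivAt dw (ddw r) r) :
    HasDerivAt (liouvilleDeriv w dw) (√r • (ddw r + dw r / r - w r / (4 * r ^ 2))) r := by
  have hsqrt : HasDerivAt (fun s => √s) (1 / (2 * √r)) r := hasDerivAt_sqrt hr.ne'
  have hinv : HasDerivAt (fun s => (2 * √s)⁻¹) (-(2 * (1 / (2 * √r))) / (2 * √r) ^ 2) r :=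
    (hsqrt.const_mul 2).inv (by positivity)
  refine ((hsqrt.smul hdw).add (hinv.smul hw)).congr_deriv ?_
  obtain ⟨t, ht, rfl⟩ : ∃ t, 0 < t ∧ r = t ^ 2 := ⟨√r, sqrt_pos.2 hr, (sq_sqrt hr.le).symm⟩
  have ht0 : (t : ℂ) ≠ 0 := Complex.ofReal_ne_zero.2 ht.ne'
  simp only [sqrt_sq ht.le, Complex.real_smul]
  push_cast
  field_simp
  ring

/-- The coefficient `3 / 4` is the angular term `1` minus the `1 / 4` produced by the transform. -/
lemma hasDerivAt_liouvilleDeriv_of_radial_equation {μ z : ℂ} (hr : 0 < r)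
    (hw : HasDerivAt w (dw r) r) (hdw : HasDerivAt dw (ddw r) r)
    (hz : z = -(ddw r) - dw r / r + w r / r ^ 2 + (V r - μ) * w r) :
    HasDerivAt (liouvilleDeriv w dw)
      ((V r + 3 / 4 / r ^ 2) • liouville w r - μ * liouville w r - √r • z) r := by
  refine (hasDerivAt_liouvilleDeriv hr hw hdw).congr_deriv ?_
  rw [hz]
  simp only [liouville, Complex.real_smul]
  push_cast
  ring

lemma norm_sq_liouvilleDeriv_le (hr : 0 < r) :
    ‖liouvilleDeriv w dw r‖ ^ 2 ≤ 2 * ((‖dw r‖ ^ 2 + ‖w r‖ ^ 2 / r ^ 2) * r) := by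
  have hdw : ‖√r • dw r‖ ^ 2 = ‖dw r‖ ^ 2 * r := norm_sq_liouville hr.le
  have hw : ‖(2 * √r)⁻¹ • w r‖ ^ 2 = ‖w r‖ ^ 2 / r ^ 2 * r / 4 := by
    rw [norm_smul, mul_pow, Real.norm_of_nonneg (by positivity), inv_pow, mul_pow, sq_sqrt hr.le]
    field_simp
    ring
  have hw_nonneg : 0 ≤ ‖w r‖ ^ 2 / r ^ 2 * r := by positivity
  calc ‖liouvilleDeriv w dw r‖ ^ 2 ≤ (‖√r • dw r‖ + ‖(2 * √r)⁻¹ • w r‖) ^ 2 := by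
        gcongr
        exact norm_add_le _ _
    _ ≤ 2 * (‖√r • dw r‖ ^ 2 + ‖(2 * √r)⁻¹ • w r‖ ^ 2) := add_sq_le
    _ ≤ 2 * ((‖dw r‖ ^ 2 + ‖w r‖ ^ 2 / r ^ 2) * r) := by
        rw [hdw, hw]
        linarith

lemma integrableOn_norm_sq_div_sq_mul (hw : ContinuousOn w (Ioi 0))
    (hH1 : IntegrableOn (fun r => (‖dw r‖ ^ 2 + ‖w r‖ ^ 2 / r ^ 2) * r) (Ioi 0)) :
    IntegrableOn (fun r => ‖w r‖ ^ 2 / r ^ 2 * r) (Ioi 0) := by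
  have hcont : ContinuousOn (fun r => ‖w r‖ ^ 2 / r ^ 2 * r) (Ioi 0) :=
    ((hw.norm.pow 2).div (by fun_prop) fun r hr => pow_ne_zero 2 (ne_of_gt hr)).mul continuousOn_id
  refine hH1.mono' (hcont.aestronglyMeasurable measurableSet_Ioi)
    (ae_restrict_of_forall_mem measurableSet_Ioi fun r (hr : 0 < r) => ?_)
  rw [Real.norm_of_nonneg (by positivity)]
  gcongr
  exact le_add_of_nonneg_left (sq_nonneg _)

lemma integrableOn_norm_sq_liouvilleDeriv (hw : ContinuousOn w (Ioi 0))
    (hdw : ContinuousOn dw (Ioi 0))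
    (hH1 : IntegrableOn (fun r => (‖dw r‖ ^ 2 + ‖w r‖ ^ 2 / r ^ 2) * r) (Ioi 0)) :
    IntegrableOn (fun r => ‖liouvilleDeriv w dw r‖ ^ 2) (Ioi 0) := by
  have hinv : ContinuousOn (fun r => (2 * √r)⁻¹) (Ioi 0) :=
    ContinuousOn.inv₀ (by fun_prop) fun r hr => mul_ne_zero two_ne_zero (sqrt_pos.2 hr).ne'
  have hcont : ContinuousOn (liouvilleDeriv w dw) (Ioi 0) :=
    (continuous_sqrt.continuousOn.smul hdw).add (hinv.smul hw)
  refine (hH1.const_mul 2).mono' ((hcont.norm.pow 2).aestronglyMeasurable measurableSet_Ioi)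
    (ae_restrict_of_forall_mem measurableSet_Ioi fun r hr => ?_)
  rw [Real.norm_of_nonneg (sq_nonneg _)]
  exact norm_sq_liouvilleDeriv_le hr

lemma setIntegral_norm_sq_liouville_div_sq :
    ∫ r in Ioi (0 : ℝ), ‖liouville w r‖ ^ 2 / r ^ 2 = ∫ r in Ioi (0 : ℝ), ‖w r‖ ^ 2 / r ^ 2 * r :=
  setIntegral_congr_fun measurableSet_Ioi fun r (hr : 0 < r) => by
    simp only [norm_sq_liouville hr.le]
    ring

lemma hasFiniteEnergy_liouville (hw : ContinuousOn w (Ioi 0)) (hdw : ContinuousOn dw (Ioi 0))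
    (hL2 : IntegrableOn (fun r => ‖w r‖ ^ 2 * r) (Ioi 0))
    (hH1 : IntegrableOn (fun r => (‖dw r‖ ^ 2 + ‖w r‖ ^ 2 / r ^ 2) * r) (Ioi 0))
    (hVw : IntegrableOn (fun r => V r * ‖w r‖ ^ 2 * r) (Ioi 0)) :
    HasFiniteEnergy (fun r => V r + 3 / 4 / r ^ 2) (liouville w) (liouvilleDeriv w dw) := by
  have hw_div := integrableOn_norm_sq_div_sq_mul hw hH1
  refine ⟨hL2.congr_fun (fun r (hr : 0 < r) => ?_) measurableSet_Ioi,
    integrableOn_norm_sq_liouvilleDeriv hw hdw hH1,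
    hw_div.congr_fun (fun r (hr : 0 < r) => ?_) measurableSet_Ioi,
    IntegrableOn.congr_fun (hVw.add (hw_div.const_mul (3 / 4))) (fun r (hr : 0 < r) => ?_)
      measurableSet_Ioi⟩ <;>
  simp only [norm_sq_liouville hr.le, Pi.add_apply] <;> ring

end Liouville

section Radial

variable {V : ℝ → ℝ} {w : ℝ → ℂ} {r : ℝ}

lemma hasDerivAt_id_mul_add_inverseSquare {c : ℝ} (hr : r ≠ 0) (hV : DifferentiableAt ℝ V r) :
    HasDerivAt (fun s => s * (V s + c / s ^ 2)) (deriv (fun s => s * V s) r - c / r ^ 2) r := by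
  have hsV : HasDerivAt (fun s => s * V s) (deriv (fun s => s * V s) r) r :=
    (differentiableAt_id.mul hV).hasDerivAt
  refine ((hsV.add ((hasDerivAt_inv hr).const_mul c)).congr_of_eventuallyEq ?_).congr_deriv
    (by ring)
  filter_upwards [eventually_ne_nhds hr] with s hs
  simp only [Pi.add_apply]
  field_simp

lemma integrableOn_mul_norm_sq_mul {c : ℝ} (hV : ContinuousOn V (Ioi 0))
    (hVc : ∀ r ∈ Ioi (0 : ℝ), |r ^ 2 * V r| ≤ c) (hw : ContinuousOn w (Ioi 0))
    (hwr : IntegrableOn (fun r => ‖w r‖ ^ 2 / r ^ 2 * r) (Ioi 0)) :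
    IntegrableOn (fun r => V r * ‖w r‖ ^ 2 * r) (Ioi 0) := by
  refine (hwr.const_mul c).mono' (((hV.mul (hw.norm.pow 2)).mul
    continuousOn_id).aestronglyMeasurable measurableSet_Ioi)
    (ae_restrict_of_forall_mem measurableSet_Ioi fun r (hr : 0 < r) => ?_)
  calc ‖V r * ‖w r‖ ^ 2 * r‖ = ‖r ^ 2 * V r * (‖w r‖ ^ 2 / r ^ 2 * r)‖ := by
        congr 1
        field_simp
    _ = |r ^ 2 * V r| * (‖w r‖ ^ 2 / r ^ 2 * r) := by
        rw [norm_mul, Real.norm_eq_abs, Real.norm_of_nonneg (by positivity)]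
    _ ≤ c * (‖w r‖ ^ 2 / r ^ 2 * r) := by
        gcongr
        exact hVc r hr

theorem statement14_general {ν : ℝ} {μ : ℂ} {dw ddw f : ℝ → ℂ} (hν : 0 < ν)
    (hV : ∀ r ∈ Ioi (0 : ℝ), DifferentiableAt ℝ V r)
    (hV_lower : ∀ r ∈ Ioi (0 : ℝ), -5 / 4 ≤ r ^ 2 * V r)
    (hV_repulsive : ∀ r ∈ Ioi (0 : ℝ), ν ≤ 1 - r ^ 2 * deriv (fun ρ => ρ * V ρ) r)
    (hw : ∀ r ∈ Ioi (0 : ℝ), HasDerivAt w (dw r) r)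
    (hdw : ∀ r ∈ Ioi (0 : ℝ), HasDerivAt dw (ddw r) r)
    (hL2 : IntegrableOn (fun r => ‖w r‖ ^ 2 * r) (Ioi 0))
    (hH1 : IntegrableOn (fun r => (‖dw r‖ ^ 2 + ‖w r‖ ^ 2 / r ^ 2) * r) (Ioi 0))
    (hVw : IntegrableOn (fun r => V r * ‖w r‖ ^ 2 * r) (Ioi 0))
    (hf : ∀ r ∈ Ioi (0 : ℝ), f r = -(ddw r) - dw r / r + w r / r ^ 2 + (V r - μ) * w r)
    (hfL2 : IntegrableOn (fun r => r ^ 2 * ‖f r‖ ^ 2 * r) (Ioi 0)) :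
    √(∫ r in Ioi (0 : ℝ), ‖w r‖ ^ 2 / r ^ 2 * r) ≤
      √(2 * ν + 1) / ν * √(∫ r in Ioi (0 : ℝ), r ^ 2 * ‖f r‖ ^ 2 * r) := by
  have hE : HasFiniteEnergy (fun r => V r + 3 / 4 / r ^ 2) (liouville w) (liouvilleDeriv w dw) :=
    hasFiniteEnergy_liouville (fun r hr => (hw r hr).continuousAt.continuousWithinAt)
      (fun r hr => (hdw r hr).continuousAt.continuousWithinAt) hL2 hH1 hVw
  have hsource (r : ℝ) (hr : r ∈ Ioi (0 : ℝ)) :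
      r ^ 2 * ‖f r‖ ^ 2 * r = r ^ 2 * ‖liouville f r‖ ^ 2 := by
    rw [norm_sq_liouville (le_of_lt hr), mul_assoc]
  have hmain := hE.integral_norm_sq_div_sq_le (μ := μ) hν (g := liouville f)
    (fun r hr => hasDerivAt_id_mul_add_inverseSquare (c := 3 / 4) (ne_of_gt hr) (hV r hr))
    (fun r hr => ?_) (fun r hr => ?_)
    (fun r hr => hasDerivAt_liouville hr (hw r hr))
    (fun r hr => hasDerivAt_liouvilleDeriv_of_radial_equation hr (hw r hr) (hdw r hr) (hf r hr))
    (hfL2.congr_fun hsource measurableSet_Ioi)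
  · rw [setIntegral_norm_sq_liouville_div_sq, ← setIntegral_congr_fun measurableSet_Ioi hsource]
      at hmain
    refine (Real.sqrt_le_sqrt hmain).trans_eq ?_
    rw [sqrt_mul (by positivity), sqrt_div (by positivity), sqrt_sq hν.le]
  · have hr0 : r ≠ 0 := ne_of_gt hr
    have : r ^ 2 * (V r + 3 / 4 / r ^ 2) = r ^ 2 * V r + 3 / 4 := by field_simp
    linarith [hV_lower r hr]
  · have hr0 : r ≠ 0 := ne_of_gt hr
    have : r ^ 2 * (deriv (fun s => s * V s) r - 3 / 4 / r ^ 2) =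
        r ^ 2 * deriv (fun s => s * V s) r - 3 / 4 := by field_simp
    linarith [hV_repulsive r hr]

end Radial

/-- **Uniform weighted resolvent estimate in two dimensions for critical-decay
repulsive potentials.** Let V ∈ C^∞(0,∞) with 0 ≤ r²V(r) ≤ c₀ and
1 − r²(rV(r))′ ≥ ν > 0. There is C = C(ν,c₀) such that, uniformly in μ ∈ ℂ with
Im μ ≠ 0: if v ∈ H²(ℝ²) has the form v(x) = e^{iθ}w(r), and
f := (−Δ + V − μ)v (i.e. f = −w″ − w′/r + w/r² + (V−μ)w) satisfies |x|f ∈ L²,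
then ‖v/|x|‖_{L²(ℝ²)} ≤ C ‖|x|f‖_{L²(ℝ²)}. -/
theorem statement14 (c₀ ν : ℝ) (hc₀ : 0 < c₀) (hν : 0 < ν) :
    ∃ C > (0:ℝ), ∀ V : ℝ → ℝ,
      -- V ∈ C^∞(0,∞)
      ContDiffOn ℝ (⊤ : ℕ∞) V (Ioi (0:ℝ)) →
      -- 0 ≤ r² V(r) ≤ c₀
      (∀ r ∈ Ioi (0:ℝ), 0 ≤ r ^ 2 * V r ∧ r ^ 2 * V r ≤ c₀) →
      -- repulsivity: 1 − r² (r V(r))' ≥ ν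
      (∀ r ∈ Ioi (0:ℝ), ν ≤ 1 - r ^ 2 * deriv (fun ρ => ρ * V ρ) r) →
      ∀ (μ : ℂ), μ.im ≠ 0 →
      ∀ (w dw ddw : ℝ → ℂ),
      -- radial profile w of v(x) = e^{iθ} w(r), twice differentiable on (0,∞)
      (∀ r ∈ Ioi (0:ℝ), HasDerivAt w (dw r) r) →
      (∀ r ∈ Ioi (0:ℝ), HasDerivAt dw (ddw r) r) →
      -- v ∈ H²(ℝ²): v ∈ L², ∇v ∈ L² (in particular v/|x| ∈ L²), D²v ∈ L²
      IntegrableOn (fun r => ‖w r‖ ^ 2 * r) (Ioi (0:ℝ)) →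
      IntegrableOn (fun r => (‖dw r‖ ^ 2 + ‖w r‖ ^ 2 / r ^ 2) * r) (Ioi (0:ℝ)) →
      IntegrableOn (fun r => ‖ddw r + dw r / (r:ℂ) - w r / (r:ℂ) ^ 2‖ ^ 2 * r)
        (Ioi (0:ℝ)) →
      ∀ f : ℝ → ℂ,
      -- f = (−Δ + V − μ) v, written radially
      (∀ r ∈ Ioi (0:ℝ),
        f r = -(ddw r) - dw r / (r:ℂ) + w r / (r:ℂ) ^ 2 + (((V r : ℝ) : ℂ) - μ) * w r) →
      -- |x| f ∈ L²
      IntegrableOn (fun r => r ^ 2 * ‖f r‖ ^ 2 * r) (Ioi (0:ℝ)) →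
      Real.sqrt (∫ r in Ioi (0:ℝ), ‖w r‖ ^ 2 / r ^ 2 * r)
        ≤ C * Real.sqrt (∫ r in Ioi (0:ℝ), r ^ 2 * ‖f r‖ ^ 2 * r) := by
  refine ⟨√(2 * ν + 1) / ν, by positivity, ?_⟩
  intro V hV_smooth hV_bounds hV_repulsive μ _ w dw ddw hw hdw hL2 hH1 _ f hf hfL2
  have hV (r : ℝ) (hr : r ∈ Ioi (0 : ℝ)) : DifferentiableAt ℝ V r :=
    ((hV_smooth r hr).contDiffAt (Ioi_mem_nhds hr)).differentiableAt (by simp)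
  have hw_cont : ContinuousOn w (Ioi 0) := fun r hr => (hw r hr).continuousAt.continuousWithinAt
  have hVw : IntegrableOn (fun r => V r * ‖w r‖ ^ 2 * r) (Ioi 0) :=
    integrableOn_mul_norm_sq_mul hV_smooth.continuousOn
      (fun r hr => by rw [abs_of_nonneg (hV_bounds r hr).1]; exact (hV_bounds r hr).2)
      hw_cont (integrableOn_norm_sq_div_sq_mul hw_cont hH1)
  exact statement14_general hν hV (fun r hr => by linarith [(hV_bounds r hr).1]) hV_repulsive
    hw hdw hL2 hH1 hVw hf hfL2

end
end
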